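/- arXiv:2010.03398 — 9 statements merged into one kernel-verified Lean document; each statement's English description precedes it below -/
import Mathlib

section
/- Let A be an n×N integer matrix (n<N) with columns a(1),…,a(N), let σ ⊆ {1,…,N} be a simplex such that the sum of the entries of A_σ^{-1}a(j) is at most 1 for every j ∉ σ, let σ = σ^u ⊔ σ^d be a partition, and let c ∈ ℂ^n be very generic with respect to σ. Then there exists R > 0 such that for every z ∈ (ℂ∖(-∞,0])^N satisfying |z_j|·∏_{i∈σ}|z_i|^{-p_{σi}(a(j))} < R for every j ∉ σ with Σ_{i∈σ} p_{σi}(a(j)) = 1 (and no condition on the coordinates z_j with Σ_{i∈σ} p_{σi}(a(j)) < 1), the family of terms of the Γ-series ψ_{σ^d}^{σ^u}(z;c) indexed by m ∈ ℤ_{≥0}^{σ̄} is absolutely summable. -/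
open Complex

/-- The term of the Γ-series `ψ_{σ^d}^{σ^u}(z;c)` indexed by `m ∈ ℤ_{≥0}^{σ̄}`.
Here `B` is the inverse of `A_σ` (as a complex matrix), so that
`p_{σ i}(v) = (B.mulVec v) i`. -/
noncomputable def gammaSeriesTerm {n N : ℕ} (A : Matrix (Fin n) (Fin N) ℤ)
    (σ σu σd : Finset (Fin N)) (B : Matrix {i : Fin N // i ∈ σ} (Fin n) ℂ)
    (z : Fin N → ℂ) (c : Fin n → ℂ) (m : {j : Fin N // j ∉ σ} → ℕ) : ℂ :=
  let pc : {i : Fin N // i ∈ σ} → ℂ :=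
    B.mulVec (fun r => c r + ∑ j : {j : Fin N // j ∉ σ}, (A r j.1 : ℂ) * (m j : ℂ))
  (∏ i : {i : Fin N // i ∈ σ}, if i.1 ∈ σu then Complex.Gamma (pc i) else 1) /
    ((∏ i : {i : Fin N // i ∈ σ}, if i.1 ∈ σd then Complex.Gamma (1 - pc i) else 1) *
      ∏ j : {j : Fin N // j ∉ σ}, ((m j).factorial : ℂ)) *
    (∏ i : {i : Fin N // i ∈ σ}, Complex.exp (-(pc i) *
      (Complex.log (z i.1) + (if i.1 ∈ σu then (Real.pi : ℂ) * Complex.I else 0)))) *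
    ∏ j : {j : Fin N // j ∉ σ}, z j.1 ^ (m j)

open Filter Topology

/-- A non-integral shift `β` satisfies `‖β - q‖ ≥ δ q` for all `q ≥ 1`. -/
lemma exists_pos_mul_le_norm_sub_natCast (β : ℂ) (hβ : ∀ l : ℤ, β ≠ l) :
    ∃ δ : ℝ, 0 < δ ∧ δ ≤ 1 ∧ ∀ q : ℕ, δ * (q + 1) ≤ ‖β - (q + 1)‖ := by
  have hev : ∀ᶠ δ : ℝ in 𝓝[>] 0, ∀ q ∈ Finset.range (⌈2 * ‖β‖⌉₊ + 1),
      δ * (q + 1) ≤ ‖β - (q + 1)‖ := by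
    rw [Filter.eventually_all_finset]
    intro q _
    have hpos : 0 < ‖β - ((q : ℂ) + 1)‖ := by
      rw [norm_pos_iff, sub_ne_zero]
      exact_mod_cast hβ (q + 1)
    have ht : Tendsto (fun δ : ℝ => δ * ((q : ℝ) + 1)) (𝓝[>] 0) (𝓝 0) := by
      have : Tendsto (fun δ : ℝ => δ * ((q : ℝ) + 1)) (𝓝 0) (𝓝 (0 * ((q : ℝ) + 1))) :=
        tendsto_id.mul_const _
      rw [zero_mul] at this
      exact this.mono_left nhdsWithin_le_nhds
    exact ht.eventually_le_const hpos
  have hsmall : ∀ᶠ δ : ℝ in 𝓝[>] 0, δ ≤ 1 / 2 :=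
    nhdsWithin_le_nhds (Iic_mem_nhds (by norm_num))
  obtain ⟨δ, h1, h2, h3⟩ := (hev.and (hsmall.and self_mem_nhdsWithin)).exists
  refine ⟨δ, h3, by linarith, fun q => ?_⟩
  by_cases hq : q ∈ Finset.range (⌈2 * ‖β‖⌉₊ + 1)
  · exact h1 q hq
  · have hq' : ⌈2 * ‖β‖⌉₊ ≤ q := by
      simp only [Finset.mem_range, not_lt] at hq
      omega
    have hq2 : 2 * ‖β‖ ≤ q := Nat.ceil_le.mp hq'
    have hn : ‖(q : ℂ) + 1‖ = (q : ℝ) + 1 := by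
      exact_mod_cast Complex.norm_natCast (q + 1)
    have htri := norm_sub_norm_le ((q : ℂ) + 1) β
    rw [norm_sub_rev, hn] at htri
    have : δ * ((q : ℝ) + 1) ≤ 1 / 2 * ((q : ℝ) + 1) := by gcongr
    linarith

/-- Growth of a solution of the recurrence `f (k + 1) = ‖β + k‖ * f k`. -/
lemma eventually_le_rpow_of_recurrence (f : ℤ → ℝ) (hf : ∀ k, 0 ≤ f k) (β : ℂ)
    (hβ : ∀ l : ℤ, β ≠ l) (hrec : ∀ k : ℤ, f (k + 1) = ‖β + k‖ * f k) (P : ℝ) (hP : 0 ≤ P) :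
    ∀ᶠ C : ℝ in atTop, ∀ X : ℝ, 1 ≤ X → ∀ k : ℤ, |(k : ℝ)| ≤ P * X →
      f k ≤ C ^ X * X ^ (k : ℝ) := by
  obtain ⟨δ, hδ, hδ1, hδq⟩ := exists_pos_mul_le_norm_sub_natCast β hβ
  have hnonneg : ∀ Y : ℝ, ∀ q : ℕ, ‖β‖ + q ≤ Y → f q ≤ f 0 * Y ^ q := by
    intro Y q
    induction q with
    | zero => simp
    | succ q ih =>
      intro hY
      push_cast at hY ⊢
      have h1 : ‖β + (q : ℤ)‖ ≤ Y := by
        refine (norm_add_le _ _).trans ?_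
        simp only [Int.cast_natCast, Complex.norm_natCast]
        linarith
      rw [hrec, pow_succ']
      calc ‖β + (q : ℤ)‖ * f q ≤ Y * (f 0 * Y ^ q) :=
            mul_le_mul h1 (ih (by linarith)) (hf _) ((norm_nonneg _).trans h1)
        _ = f 0 * (Y * Y ^ q) := by ring
  have hneg : ∀ q : ℕ, f (-q) * (δ ^ q * q.factorial) ≤ f 0 := by
    intro q
    induction q with
    | zero => simp
    | succ q ih =>
      refine le_trans ?_ ih
      have h1 := hrec (-((q + 1 : ℕ) : ℤ))
      have h2 : -((q + 1 : ℕ) : ℤ) + 1 = -(q : ℤ) := by push_cast; ring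
      have h3 : β + ((-((q + 1 : ℕ) : ℤ) : ℤ) : ℂ) = β - (q + 1) := by push_cast; ring
      rw [h2, h3] at h1
      rw [h1, Nat.factorial_succ, pow_succ]
      push_cast
      have h4 := hδq q
      have h5 : 0 ≤ f (-((q : ℤ) + 1)) * (δ ^ q * q.factorial) :=
        mul_nonneg (hf _) (by positivity)
      nlinarith [mul_le_mul_of_nonneg_right h4 h5]
  have hf0 := hf 0
  have hone : ∀ X : ℝ, 1 ≤ X → f 0 ≤ (f 0 + 1) ^ X := fun X hX =>
    calc f 0 ≤ (f 0 + 1) ^ (1 : ℝ) := by rw [Real.rpow_one]; linarith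
      _ ≤ (f 0 + 1) ^ X := Real.rpow_le_rpow_of_exponent_le (by linarith) hX
  set L : ℝ := ‖β‖ + P + 1 with hL
  have hL1 : 1 ≤ L := by have := norm_nonneg β; linarith
  have hδi : 1 ≤ δ⁻¹ := (one_le_inv₀ hδ).2 hδ1
  filter_upwards [eventually_ge_atTop ((f 0 + 1) * L ^ P),
    eventually_ge_atTop ((f 0 + 1) * (δ⁻¹ ^ P * Real.exp 1))] with C hC1 hC2 X hX k hk
  have hX0 : 0 < X := by linarith
  obtain ⟨q, rfl | rfl⟩ := Int.eq_nat_or_neg k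
  · simp only [Int.cast_natCast, Nat.abs_cast] at hk ⊢
    have hY : ‖β‖ + q ≤ L * X := by
      have := norm_nonneg β
      nlinarith
    calc f q ≤ f 0 * (L * X) ^ q := hnonneg _ q hY
      _ = f 0 * L ^ (q : ℝ) * X ^ (q : ℝ) := by
        rw [mul_pow, Real.rpow_natCast, Real.rpow_natCast]; ring
      _ ≤ (f 0 + 1) ^ X * (L ^ P) ^ X * X ^ (q : ℝ) := by
        gcongr
        · exact hone X hX
        · rw [← Real.rpow_mul (by linarith)]
          exact Real.rpow_le_rpow_of_exponent_le hL1 hk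
      _ = ((f 0 + 1) * L ^ P) ^ X * X ^ (q : ℝ) := by
        rw [Real.mul_rpow (by linarith) (by positivity)]
      _ ≤ C ^ X * X ^ (q : ℝ) := by gcongr
  · simp only [Int.cast_neg, Int.cast_natCast, abs_neg, Nat.abs_cast] at hk ⊢
    have hexp := Real.pow_div_factorial_le_exp X hX0.le q
    have hfac : (0 : ℝ) < q.factorial := by positivity
    calc f (-q) ≤ f 0 * (δ⁻¹ ^ (q : ℝ) * (X ^ q / q.factorial)) * X ^ (-(q : ℝ)) := by
          have h1 : f (-q) ≤ f 0 / (δ ^ q * q.factorial) := by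
            rw [le_div_iff₀ (by positivity)]
            exact hneg q
          refine h1.trans_eq ?_
          rw [Real.rpow_neg hX0.le, Real.rpow_natCast, Real.rpow_natCast]
          rw [inv_pow]
          field_simp
      _ ≤ (f 0 + 1) ^ X * ((δ⁻¹ ^ P) ^ X * Real.exp 1 ^ X) * X ^ (-(q : ℝ)) := by
        gcongr
        · exact hone X hX
        · rw [← Real.rpow_mul (by positivity)]
          exact Real.rpow_le_rpow_of_exponent_le hδi hk
        · rwa [Real.exp_one_rpow]
      _ = ((f 0 + 1) * (δ⁻¹ ^ P * Real.exp 1)) ^ X * X ^ (-(q : ℝ)) := by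
        rw [Real.mul_rpow (by linarith) (by positivity),
          Real.mul_rpow (by positivity) (by positivity)]
      _ ≤ C ^ X * X ^ (-(q : ℝ)) := by gcongr

/-- Growth along the arithmetic progression `γ + ℤ / D` of a function satisfying, up to a factor
of modulus one, the functional equation of the Gamma function. -/
lemma eventually_le_rpow_of_functional_equation (F : ℂ → ℝ) (hF : ∀ w, 0 ≤ F w)
    (hrec : ∀ w, w ≠ 0 → F (w + 1) = ‖w‖ * F w) (γ : ℂ) (D : ℕ) (hD : 0 < D)
    (P : ℝ) (hP : 0 ≤ P) :
    ∀ᶠ C : ℝ in atTop, ∀ X : ℝ, 1 ≤ X → ∀ T : ℤ, (∀ l : ℤ, γ + (T : ℂ) / D ≠ l) →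
      |(T : ℝ) / D| ≤ P * X → F (γ + (T : ℂ) / D) ≤ C ^ X * X ^ ((T : ℝ) / D) := by
  have hres : ∀ᶠ C : ℝ in atTop, ∀ r ∈ Finset.range D, (∀ l : ℤ, γ + (r : ℂ) / D ≠ l) →
      ∀ X : ℝ, 1 ≤ X → ∀ k : ℤ, |(k : ℝ)| ≤ (P + 1) * X →
        F (γ + (r : ℂ) / D + k) ≤ C ^ X * X ^ (k : ℝ) := by
    rw [Filter.eventually_all_finset]
    intro r _
    by_cases hr : ∀ l : ℤ, γ + (r : ℂ) / D ≠ l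
    · filter_upwards [eventually_le_rpow_of_recurrence
        (fun k : ℤ => F (γ + (r : ℂ) / D + k)) (fun _ => hF _) (γ + (r : ℂ) / D) hr
        (fun k => by
          push_cast
          rw [← add_assoc]
          refine hrec _ fun h => hr (-k) ?_
          push_cast
          exact eq_neg_of_add_eq_zero_left h) (P + 1) (by linarith)] with C hC _ using hC
    · exact Eventually.of_forall fun C h => absurd h hr
  filter_upwards [hres, eventually_ge_atTop 0] with C hC hC0 X hX T hT hTP
  have hD' : (0 : ℤ) < D := by exact_mod_cast hD
  have hDr : (0 : ℝ) < D := by exact_mod_cast hD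
  obtain ⟨r, hr⟩ := Int.eq_ofNat_of_zero_le (Int.emod_nonneg T hD'.ne')
  have hrD : r < D := by
    have := Int.emod_lt_of_pos T hD'
    omega
  have hTk : T = r + D * (T / D) := by rw [← hr]; exact (Int.emod_add_mul_ediv T D).symm
  set k := T / (D : ℤ)
  have hTr : (T : ℝ) / D = r / D + k := by
    rw [hTk]; push_cast; field_simp
  have hTc : γ + (T : ℂ) / D = γ + (r : ℂ) / D + k := by
    have : (D : ℂ) ≠ 0 := by exact_mod_cast hD.ne'
    rw [hTk]; push_cast; field_simp; ring
  have hr0 : (0 : ℝ) ≤ (r : ℝ) / D := by positivity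
  have hr1 : (r : ℝ) / D ≤ 1 := by
    rw [div_le_one hDr]; exact_mod_cast hrD.le
  rw [hTc]
  rw [hTr] at hTP ⊢
  refine (hC r (Finset.mem_range.2 hrD) (fun l hl => hT (l + k) ?_) X hX k ?_).trans ?_
  · rw [hTc, hl]; push_cast; rfl
  · rw [abs_le] at hTP ⊢
    constructor <;> nlinarith
  · have : X ^ (k : ℝ) ≤ X ^ ((r : ℝ) / D + k) :=
      Real.rpow_le_rpow_of_exponent_le hX (by linarith)
    gcongr

lemma summable_prod_apply_of_nonneg {ι : Type*} [Fintype ι] (g : ι → ℕ → ℝ)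
    (hg : ∀ i k, 0 ≤ g i k) (hs : ∀ i, Summable (g i)) :
    Summable fun m : ι → ℕ => ∏ i, g i (m i) := by
  classical
  refine summable_of_sum_le (c := ∏ i, ∑' k, g i k)
    (fun m => Finset.prod_nonneg fun i _ => hg i _) fun s => ?_
  calc ∑ m ∈ s, ∏ i, g i (m i)
      ≤ ∑ m ∈ Fintype.piFinset (fun i => s.image (· i)), ∏ i, g i (m i) := by
        refine Finset.sum_le_sum_of_subset_of_nonneg (fun m hm => ?_)
          fun m _ _ => Finset.prod_nonneg fun i _ => hg i _
        exact Fintype.mem_piFinset.2 fun i => Finset.mem_image_of_mem _ hm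
    _ = ∏ i, ∑ k ∈ s.image (· i), g i k := (Finset.prod_univ_sum _ _).symm
    _ ≤ ∏ i, ∑' k, g i k := Finset.prod_le_prod
        (fun i _ => Finset.sum_nonneg fun k _ => hg i k)
        fun i _ => (hs i).sum_le_tsum _ fun k _ => hg i k

lemma summable_mul_rpow_neg_pow (a ε : ℝ) (ha : 0 ≤ a) (hε : 0 < ε) :
    Summable fun k : ℕ => (a * ((k : ℝ) + 1) ^ (-ε)) ^ k := by
  have ht : Tendsto (fun k : ℕ => a * ((k : ℝ) + 1) ^ (-ε)) atTop (𝓝 0) := by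
    have h := ((tendsto_rpow_neg_atTop hε).comp
      (tendsto_atTop_add_const_right atTop (1 : ℝ) tendsto_natCast_atTop_atTop)).const_mul a
    rwa [mul_zero] at h
  refine summable_geometric_two.of_norm_bounded_eventually_nat ?_
  filter_upwards [ht.eventually_le_const (by norm_num : (0 : ℝ) < 1 / 2)] with k hk
  have h0 : 0 ≤ a * ((k : ℝ) + 1) ^ (-ε) := by positivity
  rw [Real.norm_of_nonneg (by positivity)]
  gcongr

lemma exists_common_denominator {ι : Type*} [Fintype ι] (p : ι → ℚ) :
    ∃ D : ℕ, 0 < D ∧ ∃ t : ι → ℤ, ∀ i, p i = t i / D := by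
  refine ⟨∏ i, (p i).den, Finset.prod_pos fun i _ => (p i).den_pos, ?_⟩
  have h : ∀ i, ∃ e : ℕ, ∏ i, (p i).den = (p i).den * e := fun i =>
    Finset.dvd_prod_of_mem (fun i => (p i).den) (Finset.mem_univ i)
  choose e he using h
  refine ⟨fun i => (p i).num * e i, fun i => ?_⟩
  have hpos : 0 < ∏ i, (p i).den := Finset.prod_pos fun i _ => (p i).den_pos
  rw [he i] at hpos ⊢
  have he0 : (e i : ℚ) ≠ 0 := by
    have := Nat.pos_of_mul_pos_left hpos
    positivity
  push_cast
  rw [mul_div_mul_right _ _ he0, Rat.num_div_den]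

/-- The weight of `m` in a Gamma-type series is bounded by a product over the coordinates of `m`. -/
lemma exists_prod_mul_inv_factorial_le {I J : Type*} [Fintype I] [Fintype J] (p : I → J → ℚ)
    (F : I → ℂ → ℝ) (hF : ∀ i w, 0 ≤ F i w)
    (hrec : ∀ i w, w ≠ 0 → F i (w + 1) = ‖w‖ * F i w) (γ : I → ℂ)
    (hγ : ∀ (m : J → ℕ) (i : I) (l : ℤ), γ i + ∑ j, (p i j : ℂ) * (m j : ℂ) ≠ l) :
    ∃ Q : ℝ, 1 ≤ Q ∧ ∀ m : J → ℕ,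
      (∏ i, F i (γ i + ∑ j, (p i j : ℂ) * (m j : ℂ))) * (∏ j, ((m j).factorial : ℝ))⁻¹ ≤
        Q * ∏ j, (Q * (1 + ∑ j', (m j' : ℝ)) ^ (-(1 - ∑ i, (p i j : ℝ)))) ^ m j := by
  obtain ⟨D, hD, t, ht⟩ := exists_common_denominator fun x : I × J => p x.1 x.2
  set P : ℝ := ∑ i, ∑ j, |(p i j : ℝ)|
  have hP : 0 ≤ P := by positivity
  have hev : ∀ᶠ C : ℝ in atTop, ∀ i, ∀ X : ℝ, 1 ≤ X → ∀ T : ℤ,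
      (∀ l : ℤ, γ i + (T : ℂ) / D ≠ l) → |(T : ℝ) / D| ≤ P * X →
        F i (γ i + (T : ℂ) / D) ≤ C ^ X * X ^ ((T : ℝ) / D) :=
    eventually_all.2 fun i =>
      eventually_le_rpow_of_functional_equation (F i) (hF i) (hrec i) (γ i) D hD P hP
  obtain ⟨C, hC, hC1⟩ := (hev.and (eventually_ge_atTop 1)).exists
  set Q : ℝ := C ^ Fintype.card I * Real.exp 1 ^ Fintype.card J with hQ
  have hQ1 : 1 ≤ Q := one_le_mul_of_one_le_of_one_le (one_le_pow₀ hC1)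
    (one_le_pow₀ (Real.one_le_exp zero_le_one))
  refine ⟨Q, hQ1, fun m => ?_⟩
  set X : ℝ := 1 + ∑ j', (m j' : ℝ) with hX
  have hsum0 : 0 ≤ ∑ j', (m j' : ℝ) := by positivity
  have hX1 : 1 ≤ X := by linarith
  have hX0 : 0 < X := by linarith
  have hmX : ∀ j, (m j : ℝ) ≤ X := fun j => by
    have := Finset.single_le_sum (f := fun j => (m j : ℝ)) (fun j _ => by positivity)
      (Finset.mem_univ j)
    linarith
  have hFi : ∀ i, F i (γ i + ∑ j, (p i j : ℂ) * (m j : ℂ)) ≤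
      C ^ X * X ^ (∑ j, (p i j : ℝ) * (m j : ℝ)) := by
    intro i
    have hTq : ∑ j, p i j * (m j : ℚ) = ((∑ j, t (i, j) * (m j : ℤ) : ℤ) : ℚ) / D := by
      push_cast
      rw [Finset.sum_div]
      exact Finset.sum_congr rfl fun j _ => by rw [ht (i, j)]; ring
    have hTr : ∑ j, (p i j : ℝ) * (m j : ℝ) =
        ((∑ j, t (i, j) * (m j : ℤ) : ℤ) : ℝ) / D := by
      exact_mod_cast congrArg (Rat.cast : ℚ → ℝ) hTq
    have hTc : ∑ j, (p i j : ℂ) * (m j : ℂ) =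
        ((∑ j, t (i, j) * (m j : ℤ) : ℤ) : ℂ) / D := by
      exact_mod_cast congrArg (Rat.cast : ℚ → ℂ) hTq
    have hbd : |∑ j, (p i j : ℝ) * (m j : ℝ)| ≤ P * X := by
      calc |∑ j, (p i j : ℝ) * (m j : ℝ)| ≤ ∑ j, |(p i j : ℝ) * (m j : ℝ)| :=
            Finset.abs_sum_le_sum_abs _ _
        _ ≤ ∑ j, |(p i j : ℝ)| * X := by
            refine Finset.sum_le_sum fun j _ => ?_
            rw [abs_mul, Nat.abs_cast]
            exact mul_le_mul_of_nonneg_left (hmX j) (abs_nonneg _)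
        _ = (∑ j, |(p i j : ℝ)|) * X := (Finset.sum_mul _ _ _).symm
        _ ≤ P * X := by
            gcongr
            exact Finset.single_le_sum (f := fun i => ∑ j, |(p i j : ℝ)|)
              (fun i _ => by positivity) (Finset.mem_univ i)
    have hγi := hγ m i
    rw [hTc] at hγi ⊢
    rw [hTr] at hbd ⊢
    exact hC i X hX1 _ hγi hbd
  have hfac : ∀ j, ((m j).factorial : ℝ)⁻¹ ≤ Real.exp 1 ^ X * X ^ (-(m j : ℝ)) := by
    intro j
    have h := Real.pow_div_factorial_le_exp X hX0.le (m j)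
    have hpos : 0 < X ^ m j := by positivity
    rw [Real.exp_one_rpow, Real.rpow_neg hX0.le, Real.rpow_natCast, ← div_eq_mul_inv,
      le_div_iff₀ hpos, mul_comm, ← div_eq_mul_inv]
    exact h
  have hexponent : (∑ i, ∑ j, (p i j : ℝ) * (m j : ℝ)) + ∑ j, -(m j : ℝ) =
      ∑ j, -(1 - ∑ i, (p i j : ℝ)) * (m j : ℝ) := by
    rw [Finset.sum_comm, ← Finset.sum_add_distrib]
    refine Finset.sum_congr rfl fun j _ => ?_
    rw [← Finset.sum_mul]
    ring
  have hQX : (C ^ X) ^ Fintype.card I * (Real.exp 1 ^ X) ^ Fintype.card J = Q * ∏ j, Q ^ m j := by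
    have hC0 : 0 ≤ C := by linarith
    have h1 : Q ^ X = Q * ∏ j, Q ^ m j := by
      rw [hX, Real.rpow_add (by linarith), Real.rpow_one, Finset.prod_pow_eq_pow_sum,
        ← Real.rpow_natCast]
      push_cast
      rfl
    rw [← h1, hQ, Real.mul_rpow (by positivity) (by positivity), ← Real.rpow_natCast,
      ← Real.rpow_natCast, ← Real.rpow_natCast, ← Real.rpow_natCast, ← Real.rpow_mul hC0,
      ← Real.rpow_mul hC0, ← Real.rpow_mul (by positivity), ← Real.rpow_mul (by positivity),
      mul_comm X, mul_comm X]
  calc (∏ i, F i (γ i + ∑ j, (p i j : ℂ) * (m j : ℂ))) * (∏ j, ((m j).factorial : ℝ))⁻¹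
      ≤ (∏ i, C ^ X * X ^ (∑ j, (p i j : ℝ) * (m j : ℝ))) *
          ∏ j, Real.exp 1 ^ X * X ^ (-(m j : ℝ)) := by
        rw [← Finset.prod_inv_distrib]
        exact mul_le_mul (Finset.prod_le_prod (fun i _ => hF _ _) fun i _ => hFi i)
          (Finset.prod_le_prod (fun j _ => by positivity) fun j _ => hfac j)
          (Finset.prod_nonneg fun j _ => by positivity)
          (Finset.prod_nonneg fun i _ => by positivity)
    _ = ((C ^ X) ^ Fintype.card I * (Real.exp 1 ^ X) ^ Fintype.card J) *
          X ^ ((∑ i, ∑ j, (p i j : ℝ) * (m j : ℝ)) + ∑ j, -(m j : ℝ)) := by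
        rw [Finset.prod_mul_distrib, Finset.prod_mul_distrib, Finset.prod_const,
          Finset.prod_const, Finset.card_univ, Finset.card_univ, Real.rpow_add hX0,
          Real.rpow_sum_of_pos hX0, Real.rpow_sum_of_pos hX0]
        ring
    _ = Q * ∏ j, (Q * X ^ (-(1 - ∑ i, (p i j : ℝ)))) ^ m j := by
        rw [hQX, hexponent, Real.rpow_sum_of_pos hX0, mul_assoc, ← Finset.prod_mul_distrib]
        congr 1
        refine Finset.prod_congr rfl fun j _ => ?_
        rw [mul_pow Q, Real.rpow_mul hX0.le, Real.rpow_natCast]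

/-- Convergence of a Gamma-type series in positive real variables. -/
lemma exists_radius_summable {I J : Type*} [Fintype I] [Fintype J] (p : I → J → ℚ)
    (hp : ∀ j, ∑ i, p i j ≤ 1) (F : I → ℂ → ℝ) (hF : ∀ i w, 0 ≤ F i w)
    (hrec : ∀ i w, w ≠ 0 → F i (w + 1) = ‖w‖ * F i w) (γ : I → ℂ)
    (hγ : ∀ (m : J → ℕ) (i : I) (l : ℤ), γ i + ∑ j, (p i j : ℂ) * (m j : ℂ) ≠ l) :
    ∃ R : ℝ, 0 < R ∧ ∀ (x : I → ℝ) (y : J → ℝ), (∀ i, 0 < x i) → (∀ j, 0 ≤ y j) →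
      (∀ j, ∑ i, p i j = 1 → y j * ∏ i, x i ^ (-(p i j : ℝ)) < R) →
      Summable fun m : J → ℕ =>
        (∏ i, F i (γ i + ∑ j, (p i j : ℂ) * (m j : ℂ))) * (∏ j, ((m j).factorial : ℝ))⁻¹ *
          (∏ i, x i ^ (-∑ j, (p i j : ℝ) * (m j : ℝ))) * ∏ j, y j ^ m j := by
  obtain ⟨Q, hQ1, hQ⟩ := exists_prod_mul_inv_factorial_le p F hF hrec γ hγ
  have hQ0 : 0 < Q := by linarith
  refine ⟨Q⁻¹, by positivity, fun x y hx hy hR => ?_⟩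
  set w : J → ℝ := fun j => y j * ∏ i, x i ^ (-(p i j : ℝ)) with hw
  have hw0 : ∀ j, 0 ≤ w j := fun j =>
    mul_nonneg (hy j) (Finset.prod_nonneg fun i _ => Real.rpow_nonneg (hx i).le _)
  set ε : J → ℝ := fun j => 1 - ∑ i, (p i j : ℝ) with hε
  have hε0 : ∀ j, 0 ≤ ε j := fun j => by
    have : ((∑ i, p i j : ℚ) : ℝ) ≤ 1 := by exact_mod_cast hp j
    push_cast at this
    simp only [hε]
    linarith
  have hcoord : ∀ j, Summable fun k : ℕ => (Q * w j * ((k : ℝ) + 1) ^ (-ε j)) ^ k := by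
    intro j
    rcases (hε0 j).eq_or_lt with h | h
    · have h1 : ∑ i, p i j = 1 := by
        have : ((∑ i, p i j : ℚ) : ℝ) = 1 := by
          push_cast
          simp only [hε] at h
          linarith
        exact_mod_cast this
      simp only [← h, neg_zero, Real.rpow_zero, mul_one]
      refine summable_geometric_of_lt_one (mul_nonneg hQ0.le (hw0 j)) ?_
      calc Q * w j < Q * Q⁻¹ := by
            have := hR j h1
            gcongr
        _ = 1 := mul_inv_cancel₀ hQ0.ne'
    · exact summable_mul_rpow_neg_pow _ _ (mul_nonneg hQ0.le (hw0 j)) h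
  refine Summable.of_nonneg_of_le (fun m => ?_) (fun m => ?_)
    ((summable_prod_apply_of_nonneg _ (fun j k => ?_) hcoord).mul_left Q)
  · refine mul_nonneg (mul_nonneg (mul_nonneg ?_ (by positivity)) ?_) ?_
    · exact Finset.prod_nonneg fun i _ => hF _ _
    · exact Finset.prod_nonneg fun i _ => Real.rpow_nonneg (hx i).le _
    · exact Finset.prod_nonneg fun j _ => pow_nonneg (hy j) _
  · have hmono : (∏ i, x i ^ (-∑ j, (p i j : ℝ) * (m j : ℝ))) * ∏ j, y j ^ m j =
        ∏ j, w j ^ m j := by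
      have h1 : ∀ i, x i ^ (-∑ j, (p i j : ℝ) * (m j : ℝ)) =
          ∏ j, (x i ^ (-(p i j : ℝ))) ^ m j := fun i => by
        rw [← Finset.sum_neg_distrib, Real.rpow_sum_of_pos (hx i)]
        refine Finset.prod_congr rfl fun j _ => ?_
        rw [← neg_mul, Real.rpow_mul (hx i).le, Real.rpow_natCast]
      simp only [h1, hw]
      rw [Finset.prod_comm, ← Finset.prod_mul_distrib]
      refine Finset.prod_congr rfl fun j _ => ?_
      rw [mul_pow, Finset.prod_pow, mul_comm]
    have hw' : 0 ≤ ∏ j, w j ^ m j := Finset.prod_nonneg fun j _ => pow_nonneg (hw0 j) _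
    rw [mul_assoc, hmono]
    refine (mul_le_mul_of_nonneg_right (hQ m) hw').trans ?_
    rw [mul_assoc, ← Finset.prod_mul_distrib]
    gcongr Q * ?_
    refine Finset.prod_le_prod (fun j _ => ?_) fun j _ => ?_
    · have := hw0 j
      positivity
    · have h0 := hw0 j
      rw [← mul_pow, mul_right_comm]
      gcongr ?_ ^ _
      refine mul_le_mul_of_nonneg_left ?_ (mul_nonneg hQ0.le h0)
      refine Real.rpow_le_rpow_of_nonpos (by positivity) ?_ (neg_nonpos.2 (hε0 j))
      have := Finset.single_le_sum (f := fun j => (m j : ℝ)) (fun j _ => by positivity)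
        (Finset.mem_univ j)
      linarith
  · have := hw0 j
    positivity

/-- if every `j ∉ σ` satisfies `|A_σ^{-1}a(j)| ≤ 1` (convergent simplex)
and `c` is very generic, then there is `R > 0` such that the Γ-series
`ψ_{σ^d}^{σ^u}(z;c)` is absolutely summable at every `z` in the slit-plane polydomain
satisfying `|z_j|·∏_{i∈σ}|z_i|^{−p_{σ i}(a(j))} < R` for every `j ∉ σ` with
`|A_σ^{-1}a(j)| = 1`. -/
theorem gammaSeries_summable_on_domain {n N : ℕ} (hn : n < N)
    (A : Matrix (Fin n) (Fin N) ℤ)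
    (σ σu σd : Finset (Fin N)) (hσcard : σ.card = n)
    (hpart : σu ∪ σd = σ) (hdisj : Disjoint σu σd)
    (B : Matrix {i : Fin N // i ∈ σ} (Fin n) ℚ)
    (hB1 : (Matrix.of fun r (i : {i : Fin N // i ∈ σ}) => ((A r i.1 : ℤ) : ℚ)) * B = 1)
    (hB2 : B * (Matrix.of fun r (i : {i : Fin N // i ∈ σ}) => ((A r i.1 : ℤ) : ℚ)) = 1)
    (hconv : ∀ j : Fin N, j ∉ σ →
      (∑ i : {i : Fin N // i ∈ σ}, B.mulVec (fun r => ((A r j : ℤ) : ℚ)) i) ≤ 1)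
    (c : Fin n → ℂ)
    (hc : ∀ (k : Fin n → ℤ) (i : {i : Fin N // i ∈ σ}) (m : ℤ),
      (B.map (fun q : ℚ => (q : ℂ))).mulVec (fun r => c r + (k r : ℂ)) i ≠ (m : ℂ)) :
    ∃ R : ℝ, 0 < R ∧ ∀ z : Fin N → ℂ,
      (∀ j : Fin N, z j ∈ Complex.slitPlane) →
      (∀ j : Fin N, j ∉ σ →
        (∑ i : {i : Fin N // i ∈ σ}, B.mulVec (fun r => ((A r j : ℤ) : ℚ)) i) = 1 →
        ‖z j‖ * ∏ i : {i : Fin N // i ∈ σ},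
          ‖z i.1‖ ^ (-((B.mulVec (fun r => ((A r j : ℤ) : ℚ)) i : ℚ) : ℝ)) < R) →
      Summable (fun m : {j : Fin N // j ∉ σ} → ℕ =>
        ‖gammaSeriesTerm A σ σu σd (B.map (fun q : ℚ => (q : ℂ))) z c m‖) := by
  set p : {i : Fin N // i ∈ σ} → {j : Fin N // j ∉ σ} → ℚ :=
    fun i j => B.mulVec (fun r => ((A r j.1 : ℤ) : ℚ)) i with hp
  set γ : {i : Fin N // i ∈ σ} → ℂ := (B.map (fun q : ℚ => (q : ℂ))).mulVec c with hγdef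
  have hpc : ∀ (m : {j : Fin N // j ∉ σ} → ℕ) (i : {i : Fin N // i ∈ σ}),
      (B.map (fun q : ℚ => (q : ℂ))).mulVec
        (fun r => c r + ∑ j : {j : Fin N // j ∉ σ}, (A r j.1 : ℂ) * (m j : ℂ)) i =
      γ i + ∑ j, (p i j : ℂ) * (m j : ℂ) := by
    intro m i
    simp only [hp, hγdef, Matrix.mulVec, dotProduct, Matrix.map_apply, mul_add,
      Finset.sum_add_distrib]
    push_cast
    simp only [Finset.mul_sum, Finset.sum_mul]
    rw [Finset.sum_comm]
    simp only [mul_assoc]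
  have hγ : ∀ (m : {j : Fin N // j ∉ σ} → ℕ) (i : {i : Fin N // i ∈ σ}) (l : ℤ),
      γ i + ∑ j, (p i j : ℂ) * (m j : ℂ) ≠ l := by
    intro m i l
    rw [← hpc]
    have h := hc (fun r => ∑ j : {j : Fin N // j ∉ σ}, A r j.1 * (m j : ℤ)) i l
    push_cast at h
    exact h
  set F : {i : Fin N // i ∈ σ} → ℂ → ℝ := fun i w =>
    if i.1 ∈ σu then ‖Complex.Gamma w‖ else ‖Complex.Gamma (1 - w)‖⁻¹ with hFdef
  have hF : ∀ i w, 0 ≤ F i w := fun i w => by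
    simp only [hFdef]
    split_ifs <;> positivity
  have hrec : ∀ i w, w ≠ 0 → F i (w + 1) = ‖w‖ * F i w := fun i w hw => by
    simp only [hFdef]
    split_ifs
    · rw [Complex.Gamma_add_one w hw, norm_mul]
    · have h1 : 1 - w = -w + 1 := by ring
      have h2 : 1 - (w + 1) = -w := by ring
      rw [h1, h2, Complex.Gamma_add_one _ (neg_ne_zero.2 hw), norm_mul, norm_neg, mul_inv,
        mul_inv_cancel_left₀ (norm_ne_zero_iff.2 hw)]
  obtain ⟨R, hR0, hR⟩ := exists_radius_summable p (fun j => hconv j.1 j.2) F hF hrec γ hγ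
  refine ⟨R, hR0, fun z hz hzR => ?_⟩
  have hz0 : ∀ j, 0 < ‖z j‖ := fun j => norm_pos_iff.2 (Complex.slitPlane_ne_zero (hz j))
  have hsum := hR (fun i => ‖z i.1‖) (fun j => ‖z j.1‖) (fun i => hz0 i.1)
    (fun j => norm_nonneg _) (fun j hj => hzR j.1 j.2 hj)
  set θ : {i : Fin N // i ∈ σ} → ℂ := fun i =>
    Complex.log (z i.1) + (if i.1 ∈ σu then (Real.pi : ℂ) * Complex.I else 0) with hθ
  have hθre : ∀ i, (θ i).re = Real.log ‖z i.1‖ := fun i => by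
    simp only [hθ]
    split_ifs <;> simp [Complex.log_re]
  refine (hsum.mul_left (∏ i, ‖Complex.exp (-γ i * θ i)‖)).congr fun m => ?_
  have hexp : ∀ i, ‖Complex.exp (-(γ i + ∑ j, (p i j : ℂ) * (m j : ℂ)) * θ i)‖ =
      ‖Complex.exp (-γ i * θ i)‖ * ‖z i.1‖ ^ (-∑ j, (p i j : ℝ) * (m j : ℝ)) := fun i => by
    have hs : ∑ j, (p i j : ℂ) * (m j : ℂ) = ((∑ j, (p i j : ℝ) * (m j : ℝ) : ℝ) : ℂ) := by
      push_cast
      rfl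
    rw [hs, neg_add, add_mul, Complex.exp_add, norm_mul, ← Complex.ofReal_neg,
      Complex.norm_exp (((_ : ℝ) : ℂ) * θ i), Complex.re_ofReal_mul, hθre, Real.rpow_def_of_pos (hz0 _),
      mul_comm (Real.log _)]
  have hFprod : ∏ i, F i (γ i + ∑ j, (p i j : ℂ) * (m j : ℂ)) =
      (∏ i : {i : Fin N // i ∈ σ}, ‖if i.1 ∈ σu then
        Complex.Gamma (γ i + ∑ j, (p i j : ℂ) * (m j : ℂ)) else 1‖) *
      (∏ i : {i : Fin N // i ∈ σ}, ‖if i.1 ∈ σd then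
        Complex.Gamma (1 - (γ i + ∑ j, (p i j : ℂ) * (m j : ℂ))) else 1‖)⁻¹ := by
    rw [← Finset.prod_inv_distrib, ← Finset.prod_mul_distrib]
    refine Finset.prod_congr rfl fun i _ => ?_
    simp only [hFdef]
    by_cases hi : i.1 ∈ σu
    · simp [hi, Finset.disjoint_left.1 hdisj hi]
    · have hid : i.1 ∈ σd := (Finset.mem_union.1 (hpart.symm ▸ i.2 : i.1 ∈ σu ∪ σd)).resolve_left hi
      simp [hi, hid]
  simp only [gammaSeriesTerm, hpc]
  simp only [norm_mul, norm_div, norm_prod, norm_pow, Complex.norm_natCast]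
  rw [hFprod, Finset.prod_congr rfl fun i _ => hexp i, Finset.prod_mul_distrib, div_eq_mul_inv,
    mul_inv]
  ring
end

section
/- Let A be an n×N integer matrix (n<N) with columns a(1),…,a(N), let σ ⊆ {1,…,N} be a simplex with partition σ = σ^u ⊔ σ^d, let c ∈ ℂ^n be very generic with respect to σ, and let U ⊆ (ℂ∖(-∞,0])^N be an open set on which the Γ-series ψ_{σ^d}^{σ^u}(z;c) is absolutely and locally uniformly summable. Then ψ_{σ^d}^{σ^u}(·;c) is holomorphic on U and satisfies the Euler equations: for every i = 1,…,n and every z ∈ U, Σ_{j=1}^N a_{ij} z_j (∂ψ_{σ^d}^{σ^u}/∂z_j)(z;c) + c_i ψ_{σ^d}^{σ^u}(z;c) = 0. -/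
open Complex

/-- A series of holomorphic functions on a neighbourhood of `z` with summable uniform bounds
can be differentiated term by term at `z`. -/
theorem hasFDerivAt_tsum_of_norm_le {E ι : Type*} [NormedAddCommGroup E] [NormedSpace ℂ E]
    {f : ι → E → ℂ} {g : ι → ℝ} {V : Set E} {z : E} (hV : V ∈ nhds z) (hg : Summable g)
    (hf : ∀ m, DifferentiableOn ℂ (f m) V) (hfg : ∀ w ∈ V, ∀ m, ‖f m w‖ ≤ g m) :
    Summable (fun m => fderiv ℂ (f m) z) ∧
      HasFDerivAt (fun w => ∑' m, f m w) (∑' m, fderiv ℂ (f m) z) z := by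
  obtain ⟨r, hr, hrV⟩ := Metric.mem_nhds_iff.1 hV
  have hr2 : 0 < r / 2 := half_pos hr
  have hsub : ∀ w ∈ Metric.ball z (r / 2), Metric.ball w (r / 2) ⊆ V := fun w hw =>
    (Metric.ball_subset_ball' (by linarith [Metric.mem_ball.1 hw])).trans hrV
  have hbound : ∀ m, ∀ w ∈ Metric.ball z (r / 2),
      ‖fderiv ℂ (f m) w‖ ≤ 2 * g m / (r / 2) := by
    intro m w hw
    refine Complex.norm_fderiv_le_div_of_mapsTo_ball ((hf m).mono (hsub w hw)) ?_ hr2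
    intro y hy
    rw [Metric.mem_closedBall, dist_eq_norm_sub]
    have hy' := hfg y (hsub w hw hy) m
    have hw' := hfg w (hsub w hw (Metric.mem_ball_self hr2)) m
    linarith [norm_sub_le (f m y) (f m w)]
  have hu : Summable fun m => 2 * g m / (r / 2) := (hg.mul_left 2).div_const _
  have hz : z ∈ Metric.ball z (r / 2) := Metric.mem_ball_self hr2
  refine ⟨.of_norm_bounded hu fun m => hbound m z hz,
    hasFDerivAt_tsum_of_isPreconnected hu Metric.isOpen_ball
      (convex_ball z (r / 2)).isPreconnected (fun m w hw => ?_) hbound hz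
      (.of_norm_bounded hg fun m => hfg z (mem_of_mem_nhds hV) m) hz⟩
  exact ((hf m).differentiableAt (Filter.mem_of_superset
    (Metric.ball_mem_nhds w hr2) (hsub w hw))).hasFDerivAt

/-- `f` is complex differentiable at `z` and its derivative in the direction `v` is
`l * f z`. -/
def HasLogDerivAlong {E : Type*} [NormedAddCommGroup E] [NormedSpace ℂ E]
    (f : E → ℂ) (l : ℂ) (v z : E) : Prop :=
  ∃ f' : E →L[ℂ] ℂ, HasFDerivAt f f' z ∧ f' v = l * f z

namespace HasLogDerivAlong

variable {E : Type*} [NormedAddCommGroup E] [NormedSpace ℂ E]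

theorem differentiableAt {f : E → ℂ} {l : ℂ} {v z : E} (hf : HasLogDerivAlong f l v z) :
    DifferentiableAt ℂ f z :=
  let ⟨_, h, _⟩ := hf
  h.differentiableAt

theorem fderiv_apply {f : E → ℂ} {l : ℂ} {v z : E} (hf : HasLogDerivAlong f l v z) :
    fderiv ℂ f z v = l * f z := by
  obtain ⟨f', h, hv⟩ := hf
  rw [h.fderiv, hv]

theorem const (k : ℂ) (v z : E) : HasLogDerivAlong (fun _ => k) 0 v z :=
  ⟨0, hasFDerivAt_const k z, by simp⟩

theorem mul {f g : E → ℂ} {k l : ℂ} {v z : E} (hf : HasLogDerivAlong f k v z)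
    (hg : HasLogDerivAlong g l v z) : HasLogDerivAlong (fun w => f w * g w) (k + l) v z := by
  obtain ⟨f', hf, hfv⟩ := hf
  obtain ⟨g', hg, hgv⟩ := hg
  refine ⟨_, hf.mul hg, ?_⟩
  simp only [add_apply, smul_apply, smul_eq_mul, hfv, hgv]
  ring

theorem prod {ι : Type*} {f : ι → E → ℂ} {l : ι → ℂ} {v z : E} (s : Finset ι)
    (hf : ∀ i ∈ s, HasLogDerivAlong (f i) (l i) v z) :
    HasLogDerivAlong (fun w => ∏ i ∈ s, f i w) (∑ i ∈ s, l i) v z := by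
  classical
  induction s using Finset.induction_on with
  | empty => simpa using const 1 v z
  | insert a s ha ih =>
    simp only [Finset.prod_insert ha, Finset.sum_insert ha]
    exact (hf a (Finset.mem_insert_self a s)).mul
      (ih fun i hi => hf i (Finset.mem_insert_of_mem hi))

theorem exp_neg_mul_log {N : ℕ} (p k a : ℂ) {v z : Fin N → ℂ} (i : Fin N)
    (hz : z i ∈ Complex.slitPlane) (hv : v i = a * z i) :
    HasLogDerivAlong (fun w : Fin N → ℂ => Complex.exp (-p * (Complex.log (w i) + k)))
      (-(a * p)) v z := by
  have h := ((((hasFDerivAt_apply (𝕜 := ℂ) i z).clog hz).add_const k).const_mul (-p)).cexp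
  refine ⟨_, h, ?_⟩
  have hz0 : z i ≠ 0 := Complex.slitPlane_ne_zero hz
  simp [hv]
  field_simp

theorem apply_pow {N : ℕ} (m : ℕ) (a : ℂ) {v z : Fin N → ℂ} (j : Fin N) (hv : v j = a * z j) :
    HasLogDerivAlong (fun w : Fin N → ℂ => w j ^ m) (a * m) v z := by
  refine ⟨_, (hasFDerivAt_apply (𝕜 := ℂ) j z).pow m, ?_⟩
  cases m with
  | zero => simp
  | succ m =>
    simp [hv]
    ring

end HasLogDerivAlong

/-- The logarithmic derivative of a term of the Γ-series along the vector field `a j * z j`. -/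
theorem hasLogDerivAlong_gammaSeriesTerm {n N : ℕ} (A : Matrix (Fin n) (Fin N) ℤ)
    (σ σu σd : Finset (Fin N)) (B : Matrix {i : Fin N // i ∈ σ} (Fin n) ℂ)
    (c : Fin n → ℂ) (m : {j : Fin N // j ∉ σ} → ℕ) (a : Fin N → ℂ) {z : Fin N → ℂ}
    (hz : ∀ j, z j ∈ Complex.slitPlane) :
    HasLogDerivAlong (fun w => gammaSeriesTerm A σ σu σd B w c m)
      (0 + ∑ s : {i : Fin N // i ∈ σ}, -(a s.1 * B.mulVec
          (fun r => c r + ∑ j : {j : Fin N // j ∉ σ}, (A r j.1 : ℂ) * (m j : ℂ)) s)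
        + ∑ j : {j : Fin N // j ∉ σ}, a j.1 * (m j : ℂ))
      (fun j => a j * z j) z := by
  unfold gammaSeriesTerm
  refine ((HasLogDerivAlong.const _ _ _).mul (.prod _ fun s _ => ?_)).mul
    (.prod _ fun j _ => ?_)
  · exact .exp_neg_mul_log _ _ _ s.1 (hz s.1) rfl
  · exact .apply_pow _ _ j.1 rfl

/-- Every term of the Γ-series is homogeneous of degree `-c i` for the `i`-th Euler operator. -/
theorem fderiv_gammaSeriesTerm_euler {n N : ℕ} (A : Matrix (Fin n) (Fin N) ℤ)
    (σ σu σd : Finset (Fin N)) (B : Matrix {i : Fin N // i ∈ σ} (Fin n) ℂ)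
    (hB : (Matrix.of fun r (i : {i : Fin N // i ∈ σ}) => ((A r i.1 : ℤ) : ℂ)) * B = 1)
    (c : Fin n → ℂ) (m : {j : Fin N // j ∉ σ} → ℕ) (i : Fin n) {z : Fin N → ℂ}
    (hz : ∀ j, z j ∈ Complex.slitPlane) :
    fderiv ℂ (fun w => gammaSeriesTerm A σ σu σd B w c m) z (fun j => (A i j : ℂ) * z j) =
      -c i * gammaSeriesTerm A σ σu σd B z c m := by
  rw [(hasLogDerivAlong_gammaSeriesTerm A σ σu σd B c m (fun j => (A i j : ℂ)) hz).fderiv_apply]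
  congr 1
  set q : Fin n → ℂ :=
    fun r => c r + ∑ j : {j : Fin N // j ∉ σ}, (A r j.1 : ℂ) * (m j : ℂ) with hq
  have hp : ∑ s : {i : Fin N // i ∈ σ}, (A i s.1 : ℂ) * B.mulVec q s = q i := by
    have h : ((Matrix.of fun r (i : {i : Fin N // i ∈ σ}) => ((A r i.1 : ℤ) : ℂ)).mulVec
        (B.mulVec q)) i = q i := by
      rw [Matrix.mulVec_mulVec, hB, Matrix.one_mulVec]
    exact h
  rw [Finset.sum_neg_distrib, hp, hq]
  ring

/-- on an open set `U` (contained in the slit-plane polydomain) where the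
Γ-series is absolutely and locally uniformly summable, its sum is holomorphic and
satisfies the Euler equations `Σ_j a_{ij} z_j ∂_j ψ + c_i ψ = 0`. -/
theorem gammaSeries_euler_equations {n N : ℕ} (hn : n < N)
    (A : Matrix (Fin n) (Fin N) ℤ)
    (σ σu σd : Finset (Fin N)) (hσcard : σ.card = n)
    (hpart : σu ∪ σd = σ) (hdisj : Disjoint σu σd)
    (B : Matrix {i : Fin N // i ∈ σ} (Fin n) ℂ)
    (hB1 : (Matrix.of fun r (i : {i : Fin N // i ∈ σ}) => ((A r i.1 : ℤ) : ℂ)) * B = 1)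
    (hB2 : B * (Matrix.of fun r (i : {i : Fin N // i ∈ σ}) => ((A r i.1 : ℤ) : ℂ)) = 1)
    (c : Fin n → ℂ)
    (hc : ∀ (k : Fin n → ℤ) (i : {i : Fin N // i ∈ σ}) (m : ℤ),
      B.mulVec (fun r => c r + (k r : ℂ)) i ≠ (m : ℂ))
    (U : Set (Fin N → ℂ)) (hUopen : IsOpen U)
    (hUslit : ∀ z ∈ U, ∀ j : Fin N, z j ∈ Complex.slitPlane)
    (hAbs : ∀ z ∈ U, Summable (fun m : {j : Fin N // j ∉ σ} → ℕ =>
      ‖gammaSeriesTerm A σ σu σd B z c m‖))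
    (hLocUnif : ∀ z₀ ∈ U, ∃ (V : Set (Fin N → ℂ)) (g : ({j : Fin N // j ∉ σ} → ℕ) → ℝ),
      IsOpen V ∧ z₀ ∈ V ∧ V ⊆ U ∧ Summable g ∧
      ∀ z ∈ V, ∀ m : {j : Fin N // j ∉ σ} → ℕ,
        ‖gammaSeriesTerm A σ σu σd B z c m‖ ≤ g m) :
    DifferentiableOn ℂ
      (fun z => ∑' m : {j : Fin N // j ∉ σ} → ℕ, gammaSeriesTerm A σ σu σd B z c m) U ∧
    ∀ (i : Fin n), ∀ z ∈ U,
      (∑ j : Fin N, (A i j : ℂ) * z j *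
        fderiv ℂ (fun w => ∑' m : {j : Fin N // j ∉ σ} → ℕ,
          gammaSeriesTerm A σ σu σd B w c m) z (Pi.single j 1))
        + c i * ∑' m : {j : Fin N // j ∉ σ} → ℕ, gammaSeriesTerm A σ σu σd B z c m
      = 0 := by
  have hderiv : ∀ z ∈ U, Summable (fun m => fderiv ℂ
        (fun w => gammaSeriesTerm A σ σu σd B w c m) z) ∧
      HasFDerivAt (fun w => ∑' m, gammaSeriesTerm A σ σu σd B w c m)
        (∑' m, fderiv ℂ (fun w => gammaSeriesTerm A σ σu σd B w c m) z) z := by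
    intro z hz
    obtain ⟨V, g, hV, hzV, hVU, hg, hle⟩ := hLocUnif z hz
    refine hasFDerivAt_tsum_of_norm_le (hV.mem_nhds hzV) hg (fun m w hw => ?_) hle
    exact (hasLogDerivAlong_gammaSeriesTerm A σ σu σd B c m 0
      (hUslit w (hVU hw))).differentiableAt.differentiableWithinAt
  refine ⟨fun z hz => (hderiv z hz).2.differentiableAt.differentiableWithinAt, fun i z hz => ?_⟩
  obtain ⟨hs, hd⟩ := hderiv z hz
  have hv : (fun j => (A i j : ℂ) * z j) =
      ∑ j : Fin N, ((A i j : ℂ) * z j) • (Pi.single j 1 : Fin N → ℂ) :=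
    pi_eq_sum_univ' _
  have hsum : ∑ j : Fin N, (A i j : ℂ) * z j *
      (∑' m, fderiv ℂ (fun w => gammaSeriesTerm A σ σu σd B w c m) z) (Pi.single j 1) =
      (∑' m, fderiv ℂ (fun w => gammaSeriesTerm A σ σu σd B w c m) z)
        (fun j => (A i j : ℂ) * z j) := by
    rw [hv, map_sum]
    simp only [map_smul, smul_eq_mul]
  have happ := (ContinuousLinearMap.apply ℂ ℂ (fun j => (A i j : ℂ) * z j)).map_tsum hs
  simp only [ContinuousLinearMap.apply_apply] at happ
  rw [hd.fderiv, hsum, happ]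
  simp only [fderiv_gammaSeriesTerm_euler A σ σu σd B hB1 c _ i (hUslit z hz), tsum_mul_left]
  ring
end

section
/- Let A be an n×N integer matrix (n<N) with columns a(1),…,a(N), let σ ⊆ {1,…,N} be a simplex with partition σ = σ^u ⊔ σ^d, let c ∈ ℂ^n be very generic with respect to σ, and let U ⊆ (ℂ∖(-∞,0])^N be an open set on which, for every k ∈ ℤ^n, the Γ-series ψ_{σ^d}^{σ^u}(z;c+k) is absolutely and locally uniformly summable. Then the Γ-series satisfies the contiguity relations: for every j = 1,…,N and every z ∈ U, (∂ψ_{σ^d}^{σ^u}/∂z_j)(z;c) = ψ_{σ^d}^{σ^u}(z; c + a(j)). (Note that c + a(j) is again very generic with respect to σ.) -/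
open Complex

/-- A locally dominated series whose partial derivatives are, up to injective reindexing, again
terms of locally dominated series can be differentiated term by term. -/
theorem fderiv_tsum_apply_single_of_reindex {ι κ : Type*} [Fintype κ] [DecidableEq κ]
    {F : ι → (κ → ℂ) → ℂ} {G : κ → ι → (κ → ℂ) → ℂ} {s : κ → ι → ι}
    (hs : ∀ j, Function.Injective (s j)) {U : Set (κ → ℂ)}
    (hdiff : ∀ m, ∀ w ∈ U, DifferentiableAt ℂ (F m) w)
    (hpartial : ∀ j m, ∀ w ∈ U, fderiv ℂ (F m) w (Pi.single j 1) =
      Function.extend (s j) (fun m => G j m w) 0 m)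
    {z : κ → ℂ} (hz : z ∈ U) (hF : Summable fun m => F m z)
    (hG : ∀ j, ∃ (V : Set (κ → ℂ)) (g : ι → ℝ), IsOpen V ∧ z ∈ V ∧ V ⊆ U ∧ Summable g ∧
      ∀ w ∈ V, ∀ m, ‖G j m w‖ ≤ g m) (hU : IsOpen U) (j : κ) :
    fderiv ℂ (fun w => ∑' m, F m w) z (Pi.single j 1) = ∑' m, G j m z := by
  choose V g hVo hzV _ hg hGg using hG
  obtain ⟨r, hr, hball⟩ := Metric.isOpen_iff.mp
    (hU.inter (isOpen_iInter_of_finite hVo)) z ⟨hz, Set.mem_iInter.mpr hzV⟩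
  have hzr : z ∈ Metric.ball z r := Metric.mem_ball_self hr
  have hbound : ∀ m, ∀ w ∈ Metric.ball z r,
      ‖fderiv ℂ (F m) w‖ ≤ ∑ j, Function.extend (s j) (g j) 0 m := by
    intro m w hw
    have hpart : ∀ j, ‖fderiv ℂ (F m) w (Pi.single j 1)‖ ≤
        Function.extend (s j) (g j) 0 m := by
      intro j
      rw [hpartial j m w (hball hw).1]
      by_cases hm : ∃ a, s j a = m
      · obtain ⟨a, rfl⟩ := hm
        rw [(hs j).extend_apply, (hs j).extend_apply]
        exact hGg j w (Set.mem_iInter.mp (hball hw).2 j) a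
      · simp [Function.extend_apply' _ _ _ hm]
    refine ContinuousLinearMap.opNorm_le_bound _
      (Finset.sum_nonneg fun j _ => (norm_nonneg _).trans (hpart j)) fun v => ?_
    conv_lhs => rw [pi_eq_sum_univ' v, map_sum]
    rw [Finset.sum_mul]
    refine norm_sum_le_of_le _ fun j _ => ?_
    rw [map_smul, norm_smul, mul_comm]
    exact mul_le_mul (hpart j) (norm_le_pi_norm v j) (norm_nonneg _)
      ((norm_nonneg _).trans (hpart j))
  have hsum : Summable fun m => ∑ j, Function.extend (s j) (g j) 0 m :=
    summable_sum fun j _ => (summable_extend_zero (hs j)).mpr (hg j)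
  have hderiv := hasFDerivAt_tsum_of_isPreconnected hsum Metric.isOpen_ball
    (convex_ball z r).isPreconnected
    (fun m w hw => (hdiff m w (hball hw).1).hasFDerivAt) hbound hzr hF hzr
  have hsummable : Summable fun m => fderiv ℂ (F m) z :=
    hsum.of_norm_bounded fun m => hbound m z hzr
  rw [hderiv.fderiv]
  refine ((ContinuousLinearMap.apply ℂ ℂ (Pi.single j 1 : κ → ℂ)).map_tsum hsummable).trans ?_
  simp_rw [ContinuousLinearMap.apply_apply, hpartial j _ z hz]
  exact tsum_extend_zero (hs j) _

/-- Derivative of a finite product in which only one factor varies. -/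
theorem hasDerivAt_prod_of_forall_ne {ι : Type*} [Fintype ι] [DecidableEq ι]
    {f : ι → ℂ → ℂ} {f' : ι → ℂ} {x : ℂ} (i₀ : ι) (h₀ : HasDerivAt (f i₀) (f' i₀) x)
    (hne : ∀ i, i ≠ i₀ → ∀ t, f i t = f' i) :
    HasDerivAt (fun t => ∏ i, f i t) (∏ i, f' i) x := by
  have hprod : (fun t => ∏ i, f i t) =
      fun t => f i₀ t * ∏ i ∈ Finset.univ.erase i₀, f' i := by
    funext t
    rw [← Finset.mul_prod_erase _ _ (Finset.mem_univ i₀)]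
    congr 1
    exact Finset.prod_congr rfl fun i hi => hne i (Finset.ne_of_mem_erase hi) t
  rw [hprod, ← Finset.mul_prod_erase _ _ (Finset.mem_univ i₀)]
  exact h₀.mul_const _

/-- A partial derivative is the derivative along the corresponding coordinate line. -/
theorem fderiv_apply_single_eq_of_hasDerivAt_update {κ : Type*} [Fintype κ] [DecidableEq κ]
    {f : (κ → ℂ) → ℂ} {w : κ → ℂ} {j : κ} {d : ℂ} (hf : DifferentiableAt ℂ f w)
    (h : HasDerivAt (fun t => f (Function.update w j t)) d (w j)) :
    fderiv ℂ f w (Pi.single j 1) = d := by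
  have hf' : HasFDerivAt f (fderiv ℂ f w) (Function.update w j (w j)) := by
    rw [Function.update_eq_self]
    exact hf.hasFDerivAt
  exact (hf'.comp_hasDerivAt (w j) (hasDerivAt_update w j (w j))).unique h

/-- The factor of a Γ-series term at an index of the simplex; `u` and `d` say whether the index
belongs to `σ^u` and to `σ^d`. -/
noncomputable def gammaFactor (u d : Prop) [Decidable u] [Decidable d] (p ζ : ℂ) : ℂ :=
  (if u then Complex.Gamma p else 1) / (if d then Complex.Gamma (1 - p) else 1) *
    Complex.exp (-p * (Complex.log ζ + (if u then (Real.pi : ℂ) * Complex.I else 0)))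

theorem hasDerivAt_gammaFactor {u d : Prop} [Decidable u] [Decidable d] (hud : u ↔ ¬ d)
    {p ζ : ℂ} (hp : p ≠ 0) (hζ : ζ ∈ Complex.slitPlane) :
    HasDerivAt (gammaFactor u d p) (gammaFactor u d (p + 1) ζ) ζ := by
  have hζ0 : ζ ≠ 0 := Complex.slitPlane_ne_zero hζ
  have hexp (a : ℂ) : HasDerivAt (fun t => Complex.exp (-p * (Complex.log t + a)))
      (Complex.exp (-p * (Complex.log ζ + a)) * (-p * ζ⁻¹)) ζ :=
    (((Complex.hasDerivAt_log hζ).add_const a).const_mul (-p)).cexp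
  unfold gammaFactor
  refine ((hexp _).const_mul _).congr_deriv ?_
  by_cases hd : d
  · have hu : ¬ u := fun h => hud.mp h hd
    have hΓ : Complex.Gamma (1 - p) = -p * Complex.Gamma (-p) := by
      rw [← Complex.Gamma_add_one (-p) (neg_ne_zero.mpr hp), neg_add_eq_sub]
    have hsplit : Complex.exp (-(p + 1) * Complex.log ζ) =
        Complex.exp (-p * Complex.log ζ) * ζ⁻¹ := by
      rw [show -(p + 1) * Complex.log ζ = -p * Complex.log ζ + -Complex.log ζ by ring,
        Complex.exp_add, Complex.exp_neg (Complex.log ζ), Complex.exp_log hζ0]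
    simp only [hu, hd, if_true, if_false, add_zero, sub_add_cancel_right, hΓ, hsplit]
    by_cases hΓ0 : Complex.Gamma (-p) = 0
    · simp [hΓ0]
    · field_simp
  · have hu : u := hud.mpr hd
    have hsplit : Complex.exp (-(p + 1) * (Complex.log ζ + Real.pi * Complex.I)) =
        Complex.exp (-p * (Complex.log ζ + Real.pi * Complex.I)) * -ζ⁻¹ := by
      rw [show -(p + 1) * (Complex.log ζ + Real.pi * Complex.I) =
          -p * (Complex.log ζ + Real.pi * Complex.I) +
            -(Complex.log ζ + Real.pi * Complex.I) by ring,
        Complex.exp_add, Complex.exp_neg (_ + _), Complex.exp_add, Complex.exp_log hζ0,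
        Complex.exp_pi_mul_I, mul_neg_one, inv_neg]
    simp only [hu, hd, if_true, if_false, hsplit, Complex.Gamma_add_one p hp]
    ring

theorem hasDerivAt_pow_div_factorial (k : ℕ) (ζ : ℂ) :
    HasDerivAt (fun t : ℂ => t ^ (k + 1) / ((k + 1).factorial : ℂ))
      (ζ ^ k / (k.factorial : ℂ)) ζ := by
  refine ((hasDerivAt_pow (k + 1) ζ).div_const _).congr_deriv ?_
  have h1 : (k.factorial : ℂ) ≠ 0 := Nat.cast_ne_zero.mpr k.factorial_ne_zero
  have h2 : (k : ℂ) + 1 ≠ 0 := Nat.cast_add_one_ne_zero k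
  rw [Nat.factorial_succ, Nat.add_sub_cancel]
  push_cast
  field_simp

section GammaSeries

variable {n N : ℕ} (A : Matrix (Fin n) (Fin N) ℤ) (σ σu σd : Finset (Fin N))
  (B : Matrix {i : Fin N // i ∈ σ} (Fin n) ℂ)

/-- The exponents `p_{σ i}(c + A_{σ̄} m)`. -/
noncomputable def gammaExponent (c : Fin n → ℂ) (m : {j : Fin N // j ∉ σ} → ℕ) :
    {i : Fin N // i ∈ σ} → ℂ :=
  B.mulVec (fun r => c r + ∑ j : {j : Fin N // j ∉ σ}, (A r j.1 : ℂ) * (m j : ℂ))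

theorem gammaSeriesTerm_eq_prod (z : Fin N → ℂ) (c : Fin n → ℂ)
    (m : {j : Fin N // j ∉ σ} → ℕ) :
    gammaSeriesTerm A σ σu σd B z c m =
      (∏ i : {i : Fin N // i ∈ σ},
        gammaFactor (i.1 ∈ σu) (i.1 ∈ σd) (gammaExponent A σ B c m i) (z i.1)) *
      ∏ j : {j : Fin N // j ∉ σ}, z j.1 ^ m j / ((m j).factorial : ℂ) := by
  simp only [gammaSeriesTerm, gammaFactor, gammaExponent, Finset.prod_mul_distrib,
    Finset.prod_div_distrib]
  ring

/-- The injection of the index set matching `∂_j` of the series for `c` with the series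
for `c + a(j)`. -/
def gammaShift (j : Fin N) (m : {j : Fin N // j ∉ σ} → ℕ) : {j : Fin N // j ∉ σ} → ℕ :=
  if h : j ∈ σ then m else m + Pi.single ⟨j, h⟩ 1

theorem gammaShift_injective (j : Fin N) : Function.Injective (gammaShift σ j) := by
  intro m m' h
  by_cases hj : j ∈ σ
  · simpa [gammaShift, hj] using h
  · simpa [gammaShift, hj] using h

theorem differentiableAt_gammaSeriesTerm (c : Fin n → ℂ) (m : {j : Fin N // j ∉ σ} → ℕ)
    {w : Fin N → ℂ} (hw : ∀ j, w j ∈ Complex.slitPlane) :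
    DifferentiableAt ℂ (fun w => gammaSeriesTerm A σ σu σd B w c m) w := by
  have hlog (i : Fin N) : DifferentiableAt ℂ (fun w : Fin N → ℂ => Complex.log (w i)) w :=
    (differentiableAt_apply i w).clog (hw i)
  unfold gammaSeriesTerm
  fun_prop

variable {A σ B}

theorem gammaExponent_add_col (c : Fin n → ℂ) (m : {j : Fin N // j ∉ σ} → ℕ)
    (hB : B * (Matrix.of fun r (i : {i : Fin N // i ∈ σ}) => ((A r i.1 : ℤ) : ℂ)) = 1)
    (j i : {i : Fin N // i ∈ σ}) :
    gammaExponent A σ B (fun r => c r + (A r j.1 : ℂ)) m i =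
      gammaExponent A σ B c m i + if i = j then 1 else 0 := by
  have hij := congrFun (congrFun hB i) j
  rw [Matrix.mul_apply, Matrix.one_apply] at hij
  rw [← hij]
  simp only [gammaExponent, Matrix.mulVec, dotProduct, Matrix.of_apply]
  rw [← Finset.sum_add_distrib]
  exact Finset.sum_congr rfl fun r _ => by ring

theorem gammaExponent_add_single (c : Fin n → ℂ) (m : {j : Fin N // j ∉ σ} → ℕ)
    (j : {j : Fin N // j ∉ σ}) :
    gammaExponent A σ B c (m + Pi.single j 1) =
      gammaExponent A σ B (fun r => c r + (A r j.1 : ℂ)) m := by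
  unfold gammaExponent
  congr 1
  funext r
  simp only [Pi.add_apply, Nat.cast_add, mul_add, Finset.sum_add_distrib]
  have hsingle : ∑ x, (A r x.1 : ℂ) * ((Pi.single j 1 : {j : Fin N // j ∉ σ} → ℕ) x : ℂ) =
      A r j.1 := by
    rw [Finset.sum_eq_single j] <;> simp +contextual
  rw [hsingle]
  ring

theorem gammaExponent_ne_zero {c : Fin n → ℂ}
    (hc : ∀ (k : Fin n → ℤ) (i : {i : Fin N // i ∈ σ}) (m : ℤ),
      B.mulVec (fun r => c r + (k r : ℂ)) i ≠ (m : ℂ))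
    (m : {j : Fin N // j ∉ σ} → ℕ) (i : {i : Fin N // i ∈ σ}) :
    gammaExponent A σ B c m i ≠ 0 := by
  have h := hc (fun r => ∑ j : {j : Fin N // j ∉ σ}, A r j.1 * (m j : ℤ)) i 0
  push_cast at h
  exact h

variable {σu σd}

/-- Termwise contiguity relation. -/
theorem fderiv_gammaSeriesTerm_apply_single (hpart : σu ∪ σd = σ) (hdisj : Disjoint σu σd)
    (hB : B * (Matrix.of fun r (i : {i : Fin N // i ∈ σ}) => ((A r i.1 : ℤ) : ℂ)) = 1)
    {c : Fin n → ℂ}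
    (hc : ∀ (k : Fin n → ℤ) (i : {i : Fin N // i ∈ σ}) (m : ℤ),
      B.mulVec (fun r => c r + (k r : ℂ)) i ≠ (m : ℂ))
    (j : Fin N) (m : {j : Fin N // j ∉ σ} → ℕ) {w : Fin N → ℂ}
    (hw : ∀ j, w j ∈ Complex.slitPlane) :
    fderiv ℂ (fun w => gammaSeriesTerm A σ σu σd B w c m) w (Pi.single j 1) =
      Function.extend (gammaShift σ j)
        (fun m => gammaSeriesTerm A σ σu σd B w (fun r => c r + (A r j : ℂ)) m) 0 m := by
  refine fderiv_apply_single_eq_of_hasDerivAt_update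
    (differentiableAt_gammaSeriesTerm A σ σu σd B c m hw) ?_
  simp only [gammaSeriesTerm_eq_prod]
  by_cases hj : j ∈ σ
  · have hext := (gammaShift_injective σ j).extend_apply (fun m =>
      gammaSeriesTerm A σ σu σd B w (fun r => c r + (A r j : ℂ)) m) 0 m
    have hshift : gammaShift σ j m = m := by simp [gammaShift, hj]
    rw [hshift] at hext
    simp only [gammaSeriesTerm_eq_prod] at hext
    rw [hext]
    have hconst : ∀ t, ∏ l : {j : Fin N // j ∉ σ},
        Function.update w j t l.1 ^ m l / ((m l).factorial : ℂ) =
          ∏ l : {j : Fin N // j ∉ σ}, w l.1 ^ m l / ((m l).factorial : ℂ) := fun t =>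
      Finset.prod_congr rfl fun l _ => by
        rw [Function.update_of_ne (fun h : l.1 = j => l.2 (h ▸ hj))]
    simp only [hconst]
    refine HasDerivAt.mul_const ?_ _
    refine hasDerivAt_prod_of_forall_ne ⟨j, hj⟩ ?_ fun i hi t => ?_
    · rw [gammaExponent_add_col c m hB ⟨j, hj⟩, if_pos rfl]
      simp only [Function.update_self]
      refine hasDerivAt_gammaFactor ?_ (gammaExponent_ne_zero hc m _) (hw j)
      refine ⟨fun hu hd => Finset.disjoint_left.mp hdisj hu hd, fun hd => ?_⟩
      exact (Finset.mem_union.mp (hpart.symm ▸ hj)).resolve_right hd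
    · rw [gammaExponent_add_col c m hB ⟨j, hj⟩, if_neg hi, add_zero,
        Function.update_of_ne (fun h => hi (Subtype.ext h))]
  · have hconst : ∀ t, ∏ i : {i : Fin N // i ∈ σ}, gammaFactor (i.1 ∈ σu) (i.1 ∈ σd)
          (gammaExponent A σ B c m i) (Function.update w j t i.1) =
        ∏ i : {i : Fin N // i ∈ σ}, gammaFactor (i.1 ∈ σu) (i.1 ∈ σd)
          (gammaExponent A σ B c m i) (w i.1) := fun t =>
      Finset.prod_congr rfl fun i _ => by
        rw [Function.update_of_ne (fun h : i.1 = j => hj (h ▸ i.2))]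
    simp only [hconst]
    by_cases hm : ∃ m', gammaShift σ j m' = m
    · obtain ⟨m, rfl⟩ := hm
      rw [(gammaShift_injective σ j).extend_apply]
      have hshift : gammaShift σ j m = m + Pi.single ⟨j, hj⟩ 1 := by simp [gammaShift, hj]
      rw [hshift, gammaExponent_add_single]
      refine HasDerivAt.const_mul _ ?_
      refine hasDerivAt_prod_of_forall_ne ⟨j, hj⟩ ?_ fun l hl t => ?_
      · simp only [Function.update_self, Pi.add_apply, Pi.single_eq_same]
        exact hasDerivAt_pow_div_factorial (m ⟨j, hj⟩) (w j)
      · rw [Function.update_of_ne (fun h => hl (Subtype.ext h)), Pi.add_apply,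
          Pi.single_eq_of_ne hl, add_zero]
    · rw [Function.extend_apply' _ _ _ hm]
      have hm0 : m ⟨j, hj⟩ = 0 := by
        by_contra h0
        refine hm ⟨m - Pi.single ⟨j, hj⟩ 1, ?_⟩
        funext l
        by_cases hl : l = ⟨j, hj⟩
        · subst hl
          simp [gammaShift, hj]
          omega
        · simp [gammaShift, hj, hl]
      have hconst' : ∀ t, ∏ l : {j : Fin N // j ∉ σ},
          Function.update w j t l.1 ^ m l / ((m l).factorial : ℂ) =
            ∏ l : {j : Fin N // j ∉ σ}, w l.1 ^ m l / ((m l).factorial : ℂ) := fun t =>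
        Finset.prod_congr rfl fun l _ => by
          by_cases hl : l = ⟨j, hj⟩
          · simp [hl, hm0]
          · rw [Function.update_of_ne (fun h => hl (Subtype.ext h))]
      simp only [hconst']
      exact hasDerivAt_const _ _

end GammaSeries

/-- on an open set `U` (contained in the slit-plane polydomain) where, for
every shift `c + k` (`k ∈ ℤⁿ`), the Γ-series is absolutely and locally uniformly
summable, the Γ-series satisfies the contiguity relations
`∂_j ψ(z;c) = ψ(z;c+a(j))`; moreover `c + a(j)` is again very generic. -/
theorem gammaSeries_contiguity {n N : ℕ} (hn : n < N)
    (A : Matrix (Fin n) (Fin N) ℤ)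
    (σ σu σd : Finset (Fin N)) (hσcard : σ.card = n)
    (hpart : σu ∪ σd = σ) (hdisj : Disjoint σu σd)
    (B : Matrix {i : Fin N // i ∈ σ} (Fin n) ℂ)
    (hB1 : (Matrix.of fun r (i : {i : Fin N // i ∈ σ}) => ((A r i.1 : ℤ) : ℂ)) * B = 1)
    (hB2 : B * (Matrix.of fun r (i : {i : Fin N // i ∈ σ}) => ((A r i.1 : ℤ) : ℂ)) = 1)
    (c : Fin n → ℂ)
    (hc : ∀ (k : Fin n → ℤ) (i : {i : Fin N // i ∈ σ}) (m : ℤ),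
      B.mulVec (fun r => c r + (k r : ℂ)) i ≠ (m : ℂ))
    (U : Set (Fin N → ℂ)) (hUopen : IsOpen U)
    (hUslit : ∀ z ∈ U, ∀ j : Fin N, z j ∈ Complex.slitPlane)
    (hAbs : ∀ (k : Fin n → ℤ), ∀ z ∈ U,
      Summable (fun m : {j : Fin N // j ∉ σ} → ℕ =>
        ‖gammaSeriesTerm A σ σu σd B z (fun r => c r + (k r : ℂ)) m‖))
    (hLocUnif : ∀ (k : Fin n → ℤ), ∀ z₀ ∈ U,
      ∃ (V : Set (Fin N → ℂ)) (g : ({j : Fin N // j ∉ σ} → ℕ) → ℝ),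
      IsOpen V ∧ z₀ ∈ V ∧ V ⊆ U ∧ Summable g ∧
      ∀ z ∈ V, ∀ m : {j : Fin N // j ∉ σ} → ℕ,
        ‖gammaSeriesTerm A σ σu σd B z (fun r => c r + (k r : ℂ)) m‖ ≤ g m) :
    (∀ (j : Fin N) (k : Fin n → ℤ) (i : {i : Fin N // i ∈ σ}) (m : ℤ),
      B.mulVec (fun r => (c r + (A r j : ℂ)) + (k r : ℂ)) i ≠ (m : ℂ)) ∧
    ∀ (j : Fin N), ∀ z ∈ U,
      fderiv ℂ (fun w => ∑' m : {j : Fin N // j ∉ σ} → ℕ,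
        gammaSeriesTerm A σ σu σd B w c m) z (Pi.single j 1)
      = ∑' m : {j : Fin N // j ∉ σ} → ℕ,
          gammaSeriesTerm A σ σu σd B z (fun r => c r + (A r j : ℂ)) m := by
  refine ⟨fun j k i m => ?_, fun j z hz => ?_⟩
  · have h := hc (fun r => A r j + k r) i m
    simpa only [Int.cast_add, ← add_assoc] using h
  · refine fderiv_tsum_apply_single_of_reindex (gammaShift_injective σ)
      (fun m w hw => differentiableAt_gammaSeriesTerm A σ σu σd B c m (hUslit w hw))
      (G := fun j m w => gammaSeriesTerm A σ σu σd B w (fun r => c r + (A r j : ℂ)) m)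
      (fun j m w hw =>
        fderiv_gammaSeriesTerm_apply_single hpart hdisj hB2 hc j m (hUslit w hw))
      hz ?_ (fun j => hLocUnif (fun r => A r j) z hz) hUopen j
    simpa using (hAbs 0 z hz).of_norm
end

section
/- Let A be an n×N integer matrix (n<N) whose columns a(1),…,a(N) generate the lattice ℤ^n, let σ ⊆ {1,…,N} be a simplex with partition σ = σ^u ⊔ σ^d, let c ∈ ℂ^n be very generic with respect to σ, let r = [ℤ^n : A_σℤ^n], and let k(1),…,k(r) ∈ ℤ^{σ̄} be such that A_{σ̄}k(1),…,A_{σ̄}k(r) form a complete set of representatives of ℤ^n/A_σℤ^n. Let z ∈ (ℂ∖(-∞,0])^N be a point at which the Γ-series ψ_{σ^d}^{σ^u}(z;c) is absolutely summable. For k̃ ∈ ℤ^σ define ψ_{σ^d,k̃}^{σ^u}(z;c) as the Γ-series with Log z_i replaced by Log z_i + 2πi·k̃_i for each i ∈ σ, and for each l define φ_{σ^d,k(l)}^{σ^u}(z;c) as the sub-series of ψ_{σ^d}^{σ^u}(z;c) obtained by summing only over those m ∈ ℤ_{≥0}^{σ̄} with A_{σ̄}(m − k(l)) ∈ A_σℤ^n.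 Then ψ_{σ^d,k̃}^{σ^u}(z;c) = exp(−2πi·k̃^T A_σ^{-1}c) · Σ_{l=1}^r exp(−2πi·k̃^T A_σ^{-1}A_{σ̄}k(l)) · φ_{σ^d,k(l)}^{σ^u}(z;c). -/
open Complex

/-- The term of the Γ-series `ψ_{σ^d,k̃}^{σ^u}(z;c)` indexed by `m ∈ ℤ_{≥0}^{σ̄}`, where
the principal logarithm `Log z_i` is replaced by `Log z_i + 2πi·k̃_i` for `i ∈ σ`.
`B` is the inverse of `A_σ` as a complex matrix, so `p_{σ i}(v) = (B.mulVec v) i`. -/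
noncomputable def gammaSeriesTermK {n N : ℕ} (A : Matrix (Fin n) (Fin N) ℤ)
    (σ σu σd : Finset (Fin N)) (B : Matrix {i : Fin N // i ∈ σ} (Fin n) ℂ)
    (z : Fin N → ℂ) (c : Fin n → ℂ) (ktil : {i : Fin N // i ∈ σ} → ℤ)
    (m : {j : Fin N // j ∉ σ} → ℕ) : ℂ :=
  let pc : {i : Fin N // i ∈ σ} → ℂ :=
    B.mulVec (fun r => c r + ∑ j : {j : Fin N // j ∉ σ}, (A r j.1 : ℂ) * (m j : ℂ))
  (∏ i : {i : Fin N // i ∈ σ}, if i.1 ∈ σu then Complex.Gamma (pc i) else 1) /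
    ((∏ i : {i : Fin N // i ∈ σ}, if i.1 ∈ σd then Complex.Gamma (1 - pc i) else 1) *
      ∏ j : {j : Fin N // j ∉ σ}, ((m j).factorial : ℂ)) *
    (∏ i : {i : Fin N // i ∈ σ}, Complex.exp (-(pc i) *
      (Complex.log (z i.1) + 2 * (Real.pi : ℂ) * Complex.I * (ktil i : ℂ) +
        (if i.1 ∈ σu then (Real.pi : ℂ) * Complex.I else 0)))) *
    ∏ j : {j : Fin N // j ∉ σ}, z j.1 ^ (m j)

/-- Replacing `Log z_i` by `Log z_i + 2πi·k̃_i` multiplies the term indexed by `m` by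
`exp(-2πi·k̃ᵀ A_σ⁻¹(c + A_σ̄ m))`. -/
theorem gammaSeriesTermK_eq_exp_mul {n N : ℕ} (A : Matrix (Fin n) (Fin N) ℤ)
    (σ σu σd : Finset (Fin N)) (B : Matrix {i : Fin N // i ∈ σ} (Fin n) ℂ)
    (z : Fin N → ℂ) (c : Fin n → ℂ) (ktil : {i : Fin N // i ∈ σ} → ℤ)
    (m : {j : Fin N // j ∉ σ} → ℕ) :
    gammaSeriesTermK A σ σu σd B z c ktil m =
      Complex.exp (-(2 * (Real.pi : ℂ) * Complex.I) * ∑ i, (ktil i : ℂ) *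
        B.mulVec (fun t => c t + ∑ j : {j : Fin N // j ∉ σ}, (A t j.1 : ℂ) * (m j : ℂ)) i) *
      gammaSeriesTermK A σ σu σd B z c (fun _ => 0) m := by
  unfold gammaSeriesTermK
  extract_lets p
  have hexp : ∀ i : {i : Fin N // i ∈ σ},
      Complex.exp (-(p i) * (Complex.log (z i.1) +
        2 * (Real.pi : ℂ) * Complex.I * (ktil i : ℂ) +
        (if i.1 ∈ σu then (Real.pi : ℂ) * Complex.I else 0))) =
      Complex.exp (-(2 * (Real.pi : ℂ) * Complex.I) * ((ktil i : ℂ) * p i)) *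
      Complex.exp (-(p i) * (Complex.log (z i.1) +
        2 * (Real.pi : ℂ) * Complex.I * ((0 : ℤ) : ℂ) +
        (if i.1 ∈ σu then (Real.pi : ℂ) * Complex.I else 0))) := by
    intro i
    rw [← Complex.exp_add]
    congr 1
    push_cast
    ring
  rw [Finset.prod_congr rfl fun i _ => hexp i, Finset.prod_mul_distrib, ← Complex.exp_sum,
    ← Finset.mul_sum]
  ring

/-- The twisting factor depends only on the class of `v` modulo the lattice spanned by `A_σ`. -/
theorem exp_twist_eq_of_sub_mem_lattice {ι κ : Type*} [Fintype ι] [DecidableEq ι] [Fintype κ]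
    (M : Matrix κ ι ℤ) (B : Matrix ι κ ℂ) (hB : B * M.map (Int.cast : ℤ → ℂ) = 1)
    (k w : ι → ℤ) (u v : κ → ℂ) (h : ∀ t, u t - v t = ((∑ i, M t i * w i : ℤ) : ℂ)) :
    Complex.exp (-(2 * (Real.pi : ℂ) * Complex.I) * ∑ i, (k i : ℂ) * B.mulVec u i) =
      Complex.exp (-(2 * (Real.pi : ℂ) * Complex.I) * ∑ i, (k i : ℂ) * B.mulVec v i) := by
  have hu : u = v + (M.map (Int.cast : ℤ → ℂ)).mulVec (fun i => (w i : ℂ)) := by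
    ext t
    rw [Pi.add_apply, ← sub_eq_iff_eq_add', h t]
    simp [Matrix.mulVec, dotProduct]
  rw [hu, Matrix.mulVec_add, Matrix.mulVec_mulVec, hB, Matrix.one_mulVec,
    Complex.exp_eq_exp_iff_exists_int]
  refine ⟨-∑ i, k i * w i, ?_⟩
  simp only [Pi.add_apply, mul_add, Finset.sum_add_distrib]
  push_cast
  ring

/-- If `f` equals `e l * g` on the `l`-th part of a finite partition and `g` is summable, then
the sum of `f` is the combination with weights `e l` of the sums of `g` over the parts. -/
theorem tsum_eq_sum_mul_tsum_of_existsUnique {α ι : Type*} [Fintype ι] {f g : α → ℂ}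
    (hg : Summable g) (P : ι → α → Prop) (hP : ∀ a, ∃! l, P l a) (e : ι → ℂ)
    (hf : ∀ l a, P l a → f a = e l * g a) :
    ∑' a, f a = ∑ l, e l * ∑' a : {a // P l a}, g a.1 := by
  have hsub : ∀ l, e l * ∑' a : {a // P l a}, g a.1 =
      ∑' a, e l * Set.indicator {a | P l a} g a := fun l => by
    rw [tsum_mul_left]
    exact congrArg (e l * ·) (tsum_subtype {a | P l a} g)
  simp_rw [hsub]
  rw [← Summable.tsum_finsetSum fun l _ => (hg.indicator _).mul_left _]
  refine tsum_congr fun a => ?_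
  obtain ⟨l, hl, huniq⟩ := hP a
  rw [Finset.sum_eq_single l]
  · rw [Set.indicator_of_mem (s := {a | P l a}) hl, hf l a hl]
  · intro l' _ hne
    rw [Set.indicator_of_notMem (s := {a | P l' a}) fun h => hne (huniq l' h), mul_zero]
  · simp

/-- decomposition of the shifted Γ-series `ψ_{σ^d,k̃}^{σ^u}(z;c)` as an
exponential-weighted sum of the sub-series `φ_{σ^d,k(l)}^{σ^u}(z;c)` over a complete set
of representatives `A_σ̄ k(1),…,A_σ̄ k(r)` of `ℤⁿ/A_σℤⁿ`. -/
theorem gammaSeries_twist_decomposition {n N : ℕ} (hn : n < N)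
    (A : Matrix (Fin n) (Fin N) ℤ)
    (hgen : ∀ v : Fin n → ℤ, ∃ u : Fin N → ℤ, ∀ t : Fin n, v t = ∑ j : Fin N, A t j * u j)
    (σ σu σd : Finset (Fin N)) (hσcard : σ.card = n)
    (hpart : σu ∪ σd = σ) (hdisj : Disjoint σu σd)
    (B : Matrix {i : Fin N // i ∈ σ} (Fin n) ℂ)
    (hB1 : (Matrix.of fun r (i : {i : Fin N // i ∈ σ}) => ((A r i.1 : ℤ) : ℂ)) * B = 1)
    (hB2 : B * (Matrix.of fun r (i : {i : Fin N // i ∈ σ}) => ((A r i.1 : ℤ) : ℂ)) = 1)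
    (c : Fin n → ℂ)
    (hc : ∀ (k : Fin n → ℤ) (i : {i : Fin N // i ∈ σ}) (m : ℤ),
      B.mulVec (fun r => c r + (k r : ℂ)) i ≠ (m : ℂ))
    (r : ℕ) (kk : Fin r → ({j : Fin N // j ∉ σ} → ℤ))
    (hrep : ∀ v : Fin n → ℤ, ∃! l : Fin r, ∃ w : {i : Fin N // i ∈ σ} → ℤ,
      ∀ t : Fin n, v t - (∑ j : {j : Fin N // j ∉ σ}, A t j.1 * kk l j)
        = ∑ i : {i : Fin N // i ∈ σ}, A t i.1 * w i)
    (z : Fin N → ℂ) (hz : ∀ j : Fin N, z j ∈ Complex.slitPlane)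
    (hsum : Summable (fun m : {j : Fin N // j ∉ σ} → ℕ =>
      ‖gammaSeriesTermK A σ σu σd B z c (fun _ => 0) m‖))
    (ktil : {i : Fin N // i ∈ σ} → ℤ) :
    (∑' m : {j : Fin N // j ∉ σ} → ℕ, gammaSeriesTermK A σ σu σd B z c ktil m)
      = Complex.exp (-(2 * (Real.pi : ℂ) * Complex.I) *
          ∑ i : {i : Fin N // i ∈ σ}, (ktil i : ℂ) * B.mulVec c i) *
        ∑ l : Fin r,
          Complex.exp (-(2 * (Real.pi : ℂ) * Complex.I) *
            ∑ i : {i : Fin N // i ∈ σ}, (ktil i : ℂ) *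
              B.mulVec (fun t => ∑ j : {j : Fin N // j ∉ σ},
                (A t j.1 : ℂ) * (kk l j : ℂ)) i) *
          ∑' m : {mm : {j : Fin N // j ∉ σ} → ℕ //
              ∃ w : {i : Fin N // i ∈ σ} → ℤ,
                ∀ t : Fin n, (∑ j : {j : Fin N // j ∉ σ}, A t j.1 * ((mm j : ℤ) - kk l j))
                  = ∑ i : {i : Fin N // i ∈ σ}, A t i.1 * w i},
            gammaSeriesTermK A σ σu σd B z c (fun _ => 0) m.1 := by
  rw [Finset.mul_sum]
  simp_rw [← mul_assoc]
  refine tsum_eq_sum_mul_tsum_of_existsUnique hsum.of_norm _ (fun m => ?_) _ fun l m hm => ?_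
  · simpa only [mul_sub, Finset.sum_sub_distrib] using
      hrep fun t => ∑ j : {j : Fin N // j ∉ σ}, A t j.1 * (m j : ℤ)
  · obtain ⟨w, hw⟩ := hm
    rw [gammaSeriesTermK_eq_exp_mul, ← Complex.exp_add, ← mul_add, ← Finset.sum_add_distrib]
    simp_rw [← mul_add, ← Pi.add_apply, ← Matrix.mulVec_add]
    congr 1
    refine exp_twist_eq_of_sub_mem_lattice
      (Matrix.of fun t (i : {i : Fin N // i ∈ σ}) => A t i.1) B hB2 ktil w _ _ fun t => ?_
    simp only [Matrix.of_apply, ← hw t, Pi.add_apply]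
    push_cast
    simp only [mul_sub, Finset.sum_sub_distrib]
    ring
end

section
/- Let A be an n×N integer matrix whose columns a(1),…,a(N) span ℚ^n over ℚ, let a(N+1) ∈ ℤ^n, and let Ã = (A | a(N+1)) be the n×(N+1) matrix obtained by appending the column a(N+1). Let M be a left R_A-module, and equip the module M[[t]] of formal power series with coefficients in M with the left R_Ã-action in which z_j, ∂_j (1 ≤ j ≤ N), c_i, τ_i^{±1} act coefficientwise through the R_A-action on M, z_{N+1} acts as multiplication by t, and ∂_{N+1} acts as formal differentiation d/dt (this is a well-defined R_Ã-module structure). Then for every R_A-linear map f : GG(A) → M, the formal power series 𝔇f := Σ_{m=0}^∞ f([τ^{m·a(N+1)}]) · t^m/m! ∈ M[[t]] is annihilated by the left ideal I_Ã, i.e., E_i·(𝔇f) = 0 for i = 1,…,n (with E_i formed from Ã) and (∂_j − τ^{ã(j)})·(𝔇f) = 0 for j = 1,…,N+1; equivalently, there is a unique R_Ã-linear map F : GG(Ã) → M[[t]] with F([1]) = 𝔇f. -/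
/-- Generators of the difference-differential ring `R_A`: `z j`, `∂ j`, `c i`,
`τ i` and `τ i ⁻¹`. -/
inductive GGGen (n N : ℕ) : Type
  | z (j : Fin N)
  | d (j : Fin N)
  | c (i : Fin n)
  | t (i : Fin n)
  | tinv (i : Fin n)

/-- The pairs of generators that do NOT commute by decree (their products are governed
by the explicit relations instead). -/
def GGGen.NonCommPair {n N : ℕ} : GGGen n N → GGGen n N → Prop
  | .t i, .c i' => i = i'
  | .c i, .t i' => i = i'
  | .tinv i, .c i' => i = i'
  | .c i, .tinv i' => i = i'
  | .d j, .z j' => j = j'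
  | .z j, .d j' => j = j'
  | .t i, .tinv i' => i = i'
  | .tinv i, .t i' => i = i'
  | _, _ => False

/-- The defining relations of `R_A` on the free algebra:
`τᵢcᵢ = (cᵢ+1)τᵢ`, `τᵢ⁻¹cᵢ = (cᵢ−1)τᵢ⁻¹`, `∂ⱼzⱼ = zⱼ∂ⱼ + 1`, `τᵢτᵢ⁻¹ = τᵢ⁻¹τᵢ = 1`,
and all other pairs of generators commute. -/
inductive GGRel (n N : ℕ) :
    FreeAlgebra ℂ (GGGen n N) → FreeAlgebra ℂ (GGGen n N) → Prop
  | tc (i : Fin n) : GGRel n N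
      (FreeAlgebra.ι ℂ (GGGen.t i) * FreeAlgebra.ι ℂ (GGGen.c i))
      ((FreeAlgebra.ι ℂ (GGGen.c i) + 1) * FreeAlgebra.ι ℂ (GGGen.t i))
  | tinvc (i : Fin n) : GGRel n N
      (FreeAlgebra.ι ℂ (GGGen.tinv i) * FreeAlgebra.ι ℂ (GGGen.c i))
      ((FreeAlgebra.ι ℂ (GGGen.c i) - 1) * FreeAlgebra.ι ℂ (GGGen.tinv i))
  | dz (j : Fin N) : GGRel n N
      (FreeAlgebra.ι ℂ (GGGen.d j) * FreeAlgebra.ι ℂ (GGGen.z j))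
      (FreeAlgebra.ι ℂ (GGGen.z j) * FreeAlgebra.ι ℂ (GGGen.d j) + 1)
  | ttinv (i : Fin n) : GGRel n N
      (FreeAlgebra.ι ℂ (GGGen.t i) * FreeAlgebra.ι ℂ (GGGen.tinv i)) 1
  | tinvt (i : Fin n) : GGRel n N
      (FreeAlgebra.ι ℂ (GGGen.tinv i) * FreeAlgebra.ι ℂ (GGGen.t i)) 1
  | comm (g h : GGGen n N) (hc : ¬ GGGen.NonCommPair g h) : GGRel n N
      (FreeAlgebra.ι ℂ g * FreeAlgebra.ι ℂ h)
      (FreeAlgebra.ι ℂ h * FreeAlgebra.ι ℂ g)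

/-- The ring `R_A` of difference-differential operators (it depends only on `n`, `N`). -/
abbrev GGRing (n N : ℕ) : Type := RingQuot (GGRel n N)

/-- The image of a generator in `R_A`. -/
noncomputable def GGRing.gen {n N : ℕ} (g : GGGen n N) : GGRing n N :=
  RingQuot.mkAlgHom ℂ (GGRel n N) (FreeAlgebra.ι ℂ g)

/-- `τᵢ^k` for `k ∈ ℤ`, using `τᵢ⁻¹` for negative exponents. -/
noncomputable def GGRing.tpow {n N : ℕ} (i : Fin n) (k : ℤ) : GGRing n N :=
  if 0 ≤ k then GGRing.gen (GGGen.t i) ^ k.toNat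
  else GGRing.gen (GGGen.tinv i) ^ (-k).toNat

/-- `τ^v = ∏ᵢ τᵢ^{vᵢ}` for `v ∈ ℤⁿ`. -/
noncomputable def GGRing.tauPow {n N : ℕ} (v : Fin n → ℤ) : GGRing n N :=
  (List.ofFn fun i => GGRing.tpow (N := N) i (v i)).prod

/-- The Euler operator `E_i = Σ_j a_{ij} z_j ∂_j + c_i` in `R_A`. -/
noncomputable def GGRing.euler {n N : ℕ} (A : Matrix (Fin n) (Fin N) ℤ) (i : Fin n) :
    GGRing n N :=
  (∑ j : Fin N, (A i j : GGRing n N) * GGRing.gen (GGGen.z j) * GGRing.gen (GGGen.d j))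
    + GGRing.gen (GGGen.c i)

/-- The left ideal `I_A ⊆ R_A` generated by the `E_i` and the `∂_j − τ^{a(j)}`. -/
noncomputable def GGIdeal {n N : ℕ} (A : Matrix (Fin n) (Fin N) ℤ) :
    Submodule (GGRing n N) (GGRing n N) :=
  Submodule.span (GGRing n N)
    (Set.range (GGRing.euler A) ∪
      Set.range (fun j : Fin N =>
        GGRing.gen (GGGen.d j) - GGRing.tauPow (fun i => A i j)))

/-- The GG system `GG(A) = R_A/I_A` as a left `R_A`-module. -/
abbrev GGModule {n N : ℕ} (A : Matrix (Fin n) (Fin N) ℤ) : Type :=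
  GGRing n N ⧸ GGIdeal A

theorem List.prod_ofFn_mul_of_commute {R : Type*} [Monoid R] {m : ℕ} (F G : Fin m → R)
    (h : ∀ i j, Commute (F i) (G j)) :
    (List.ofFn fun i => F i * G i).prod = (List.ofFn F).prod * (List.ofFn G).prod := by
  induction m with
  | zero => simp
  | succ m ih =>
    have hc : Commute (List.ofFn fun i : Fin m => F i.succ).prod (G 0) := by
      refine Commute.list_prod_left _ _ fun x hx => ?_
      obtain ⟨i, rfl⟩ := (List.mem_ofFn' _ _).1 hx
      exact h _ _
    simp only [List.ofFn_succ, List.prod_cons]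
    rw [ih _ _ fun i j => h _ _, mul_assoc, mul_assoc, ← mul_assoc (G 0), ← hc.eq, mul_assoc]

theorem List.prod_ofFn_mul_eq_add_sum_mul {R : Type*} [Ring R] {m : ℕ} (F : Fin m → R)
    (x : R) (e : Fin m → ℤ) (h : ∀ j, F j * x = (x + (e j : R)) * F j) :
    (List.ofFn F).prod * x = (x + ((∑ j, e j : ℤ) : R)) * (List.ofFn F).prod := by
  induction m with
  | zero => simp
  | succ m ih =>
    simp only [List.ofFn_succ, List.prod_cons, Fin.sum_univ_succ]
    rw [mul_assoc, ih _ _ fun j => h j.succ, ← mul_assoc, mul_add, h 0,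
      ← Int.cast_comm (∑ j : Fin m, e j.succ) (F 0), ← add_mul, mul_assoc]
    push_cast
    rw [add_assoc]

theorem pow_mul_eq_add_intCast_mul {R : Type*} [Ring R] (t x : R) (e : ℤ)
    (h : t * x = (x + (e : R)) * t) (k : ℕ) :
    t ^ k * x = (x + ((k * e : ℤ) : R)) * t ^ k := by
  induction k with
  | zero => simp
  | succ k ih =>
    rw [pow_succ, mul_assoc, h, ← mul_assoc, mul_add, ih, ← Int.cast_comm e (t ^ k),
      ← add_mul, mul_assoc]
    push_cast
    rw [add_assoc, add_one_mul]

namespace GGRing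

variable {n N : ℕ}

theorem gen_commute (g h : GGGen n N) (hc : ¬ GGGen.NonCommPair g h) :
    Commute (gen g) (gen h) := by
  have := RingQuot.mkAlgHom_rel ℂ (GGRel.comm g h hc)
  simpa [gen, Commute, SemiconjBy] using this

theorem gen_t_mul_gen_c (i : Fin n) :
    gen (N := N) (.t i) * gen (.c i) = (gen (.c i) + 1) * gen (.t i) := by
  simpa [gen] using RingQuot.mkAlgHom_rel ℂ (GGRel.tc (N := N) i)

theorem gen_tinv_mul_gen_c (i : Fin n) :
    gen (N := N) (.tinv i) * gen (.c i) = (gen (.c i) - 1) * gen (.tinv i) := by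
  simpa [gen] using RingQuot.mkAlgHom_rel ℂ (GGRel.tinvc (N := N) i)

/-- `τᵢ` as a unit of `R_A`. -/
noncomputable def tUnit (i : Fin n) : (GGRing n N)ˣ where
  val := gen (.t i)
  inv := gen (.tinv i)
  val_inv := by simpa [gen] using RingQuot.mkAlgHom_rel ℂ (GGRel.ttinv (N := N) i)
  inv_val := by simpa [gen] using RingQuot.mkAlgHom_rel ℂ (GGRel.tinvt (N := N) i)

theorem tpow_eq_zpow (i : Fin n) (k : ℤ) :
    tpow (N := N) i k = ((tUnit i ^ k : (GGRing n N)ˣ) : GGRing n N) := by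
  unfold tpow
  split_ifs with hk
  · lift k to ℕ using hk
    simp [tUnit]
  · obtain ⟨m, rfl⟩ : ∃ m : ℕ, k = -m := ⟨(-k).toNat, by omega⟩
    rw [zpow_neg, ← inv_zpow]
    simp only [neg_neg, Int.toNat_natCast, zpow_natCast, Units.val_pow_eq_pow_val]
    rfl

theorem tpow_commute_of_gen_commute {i : Fin n} {x : GGRing n N}
    (h : Commute (gen (.t i)) x) (h' : Commute (gen (.tinv i)) x) (k : ℤ) :
    Commute (tpow i k) x := by
  unfold tpow
  split_ifs
  · exact h.pow_left _
  · exact h'.pow_left _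

theorem tpow_commute_tpow (i j : Fin n) (k l : ℤ) :
    Commute (tpow (N := N) i k) (tpow j l) := by
  have h : Commute (tUnit (N := N) i) (tUnit j) := by
    ext
    exact gen_commute _ _ (by simp [GGGen.NonCommPair])
  rw [tpow_eq_zpow, tpow_eq_zpow]
  exact (h.zpow_zpow k l).units_val

theorem tauPow_add (u v : Fin n → ℤ) :
    tauPow (N := N) (fun i => u i + v i) = tauPow u * tauPow v := by
  unfold tauPow
  rw [← List.prod_ofFn_mul_of_commute _ _ fun i j => tpow_commute_tpow i j _ _]
  simp [tpow_eq_zpow, zpow_add]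

theorem tauPow_commute (u v : Fin n → ℤ) :
    Commute (tauPow (N := N) u) (tauPow v) := by
  rw [Commute, SemiconjBy, ← tauPow_add, ← tauPow_add]
  simp only [add_comm]

theorem tauPow_commute_of_gen_commute {x : GGRing n N}
    (h : ∀ i, Commute (gen (.t i)) x) (h' : ∀ i, Commute (gen (.tinv i)) x)
    (v : Fin n → ℤ) : Commute (tauPow v) x := by
  refine Commute.list_prod_left _ _ fun y hy => ?_
  obtain ⟨i, rfl⟩ := (List.mem_ofFn' _ _).1 hy
  exact tpow_commute_of_gen_commute (h i) (h' i) _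

theorem tauPow_commute_gen_d (v : Fin n → ℤ) (j : Fin N) :
    Commute (tauPow v) (gen (.d j)) :=
  tauPow_commute_of_gen_commute
    (fun _ => gen_commute _ _ (by simp [GGGen.NonCommPair]))
    (fun _ => gen_commute _ _ (by simp [GGGen.NonCommPair])) v

theorem tauPow_commute_gen_z (v : Fin n → ℤ) (j : Fin N) :
    Commute (tauPow v) (gen (.z j)) :=
  tauPow_commute_of_gen_commute
    (fun _ => gen_commute _ _ (by simp [GGGen.NonCommPair]))
    (fun _ => gen_commute _ _ (by simp [GGGen.NonCommPair])) v

theorem tpow_mul_gen_c (i : Fin n) (k : ℤ) :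
    tpow (N := N) i k * gen (.c i) = (gen (.c i) + (k : GGRing n N)) * tpow i k := by
  unfold tpow
  split_ifs with hk
  · have := pow_mul_eq_add_intCast_mul _ _ 1
      (by simpa using gen_t_mul_gen_c (N := N) i) k.toNat
    rwa [mul_one, Int.toNat_of_nonneg hk] at this
  · have := pow_mul_eq_add_intCast_mul _ _ (-1)
      (by simpa [sub_eq_add_neg] using gen_tinv_mul_gen_c (N := N) i) (-k).toNat
    rwa [Int.toNat_of_nonneg (by omega), neg_mul_neg, mul_one] at this

theorem tauPow_mul_gen_c (v : Fin n → ℤ) (i : Fin n) :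
    tauPow (N := N) v * gen (.c i) = (gen (.c i) + (v i : GGRing n N)) * tauPow v := by
  have := List.prod_ofFn_mul_eq_add_sum_mul (fun j => tpow (N := N) j (v j)) (gen (.c i))
    (fun j => if j = i then v j else 0) fun j => by
      split_ifs with hj
      · subst hj
        exact tpow_mul_gen_c j _
      · rw [Int.cast_zero, add_zero]
        exact tpow_commute_of_gen_commute
          (gen_commute (.t j) (.c i) hj) (gen_commute (.tinv j) (.c i) hj) _
  simpa [tauPow] using this

theorem tauPow_mul_euler (A : Matrix (Fin n) (Fin N) ℤ) (v : Fin n → ℤ) (i : Fin n) :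
    tauPow v * euler A i = (euler A i + (v i : GGRing n N)) * tauPow v := by
  have h : Commute (tauPow v)
      (∑ j : Fin N, (A i j : GGRing n N) * gen (.z j) * gen (.d j)) :=
    Commute.sum_right _ _ _ fun j _ =>
      ((Int.cast_commute (A i j) (tauPow v)).symm.mul_right (tauPow_commute_gen_z v j)).mul_right
        (tauPow_commute_gen_d v j)
  rw [euler, mul_add, h.eq, tauPow_mul_gen_c, ← add_mul, add_assoc]

section Coefficientwise

variable {M : Type*} [AddCommGroup M] [Module (GGRing n N) M]
  [Module (GGRing n (N + 1)) (ℕ → M)]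

/-- `r` acts on `M[[t]]` coefficientwise through the action of `s` on `M`. -/
def ActsCoeffwise (M : Type*) [AddCommGroup M] [Module (GGRing n N) M]
    [Module (GGRing n (N + 1)) (ℕ → M)] (r : GGRing n (N + 1)) (s : GGRing n N) : Prop :=
  ∀ (F : ℕ → M) (k : ℕ), (r • F) k = s • F k

theorem ActsCoeffwise.one : ActsCoeffwise M (1 : GGRing n (N + 1)) 1 := fun F k => by simp

theorem ActsCoeffwise.mul {r r' : GGRing n (N + 1)} {s s' : GGRing n N}
    (h : ActsCoeffwise M r s) (h' : ActsCoeffwise M r' s') :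
    ActsCoeffwise M (r * r') (s * s') := fun F k => by
  rw [mul_smul, mul_smul, h, h']

theorem ActsCoeffwise.pow {r : GGRing n (N + 1)} {s : GGRing n N}
    (h : ActsCoeffwise M r s) (m : ℕ) : ActsCoeffwise M (r ^ m) (s ^ m) := by
  induction m with
  | zero => simpa using ActsCoeffwise.one
  | succ m ih => simpa [pow_succ] using ih.mul h

theorem ActsCoeffwise.prod_ofFn {m : ℕ} {r : Fin m → GGRing n (N + 1)}
    {s : Fin m → GGRing n N} (h : ∀ i, ActsCoeffwise M (r i) (s i)) :
    ActsCoeffwise M (List.ofFn r).prod (List.ofFn s).prod := by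
  induction m with
  | zero => simpa using ActsCoeffwise.one
  | succ m ih => simpa [List.ofFn_succ] using (h 0).mul (ih fun i => h i.succ)

theorem ActsCoeffwise.tauPow
    (ht : ∀ i, ActsCoeffwise M (gen (n := n) (N := N + 1) (.t i)) (gen (.t i)))
    (htinv : ∀ i, ActsCoeffwise M (gen (n := n) (N := N + 1) (.tinv i)) (gen (.tinv i)))
    (v : Fin n → ℤ) : ActsCoeffwise M (tauPow (n := n) (N := N + 1) v) (tauPow v) := by
  refine ActsCoeffwise.prod_ofFn fun i => ?_
  unfold tpow
  split_ifs
  · exact (ht i).pow _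
  · exact (htinv i).pow _

end Coefficientwise

end GGRing

theorem GGIdeal.le_ker_toSpanSingleton {n N : ℕ} {A : Matrix (Fin n) (Fin N) ℤ}
    {P : Type*} [AddCommGroup P] [Module (GGRing n N) P] {x : P}
    (hE : ∀ i, GGRing.euler A i • x = 0)
    (hD : ∀ j, (GGRing.gen (.d j) - GGRing.tauPow (fun i => A i j)) • x = 0) :
    GGIdeal A ≤ LinearMap.ker (LinearMap.toSpanSingleton (GGRing n N) P x) := by
  refine Submodule.span_le.2 ?_
  rintro _ (⟨i, rfl⟩ | ⟨j, rfl⟩)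
  · simpa using hE i
  · simpa using hD j

theorem GGModule.existsUnique_linearMap {n N : ℕ} {A : Matrix (Fin n) (Fin N) ℤ}
    {P : Type*} [AddCommGroup P] [Module (GGRing n N) P] {x : P}
    (hE : ∀ i, GGRing.euler A i • x = 0)
    (hD : ∀ j, (GGRing.gen (.d j) - GGRing.tauPow (fun i => A i j)) • x = 0) :
    ∃! F : GGModule A →ₗ[GGRing n N] P, F (Submodule.Quotient.mk 1) = x := by
  refine ⟨(GGIdeal A).liftQ _ (GGIdeal.le_ker_toSpanSingleton hE hD), ?_, fun G hG => ?_⟩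
  · exact (Submodule.liftQ_apply _ _ _).trans (by simp)
  · refine Submodule.linearMap_qext _ (LinearMap.ext_ring ?_)
    simpa using hG

theorem GGModule.euler_smul_mk_one {n N : ℕ} (A : Matrix (Fin n) (Fin N) ℤ) (i : Fin n) :
    GGRing.euler A i • (Submodule.Quotient.mk 1 : GGModule A) = 0 := by
  rw [← Submodule.Quotient.mk_smul, smul_eq_mul, mul_one]
  exact (Submodule.Quotient.mk_eq_zero _).2 (Submodule.subset_span (Or.inl ⟨i, rfl⟩))

theorem GGModule.gen_d_smul_mk_one {n N : ℕ} (A : Matrix (Fin n) (Fin N) ℤ) (j : Fin N) :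
    GGRing.gen (n := n) (.d j) • (Submodule.Quotient.mk 1 : GGModule A)
      = GGRing.tauPow (N := N) (fun i => A i j) • (Submodule.Quotient.mk 1 : GGModule A) := by
  rw [← Submodule.Quotient.mk_smul, ← Submodule.Quotient.mk_smul, smul_eq_mul, smul_eq_mul,
    mul_one, mul_one]
  exact (Submodule.Quotient.eq _).2 (Submodule.subset_span (Or.inr ⟨j, rfl⟩))

/-- with `Ã = (A | a(N+1))` and `M[[t]] = ℕ → M` equipped with the
`R_Ã`-module structure in which the `R_A`-generators act coefficientwise, `z_{N+1}` acts
as multiplication by `t` (coefficient shift) and `∂_{N+1}` as `d/dt`, the series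
`𝔇f = Σ_m f([τ^{m·a(N+1)}]) t^m/m!` is annihilated by `I_Ã` for every `R_A`-linear
`f : GG(A) → M`; equivalently there is a unique `R_Ã`-linear `F : GG(Ã) → M[[t]]`
with `F([1]) = 𝔇f`. -/
theorem gg_series_annihilated {n N : ℕ} (A : Matrix (Fin n) (Fin N) ℤ)
    (hspan : ∀ v : Fin n → ℚ, ∃ u : Fin N → ℚ,
      ∀ i : Fin n, v i = ∑ j : Fin N, (A i j : ℚ) * u j)
    (w : Fin n → ℤ)
    (Atil : Matrix (Fin n) (Fin (N + 1)) ℤ)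
    (hAtil : ∀ (i : Fin n) (j : Fin (N + 1)),
      Atil i j = if h : (j : ℕ) < N then A i ⟨j, h⟩ else w i)
    (M : Type*) [AddCommGroup M] [Module (GGRing n N) M]
    [Module (GGRing n (N + 1)) (ℕ → M)]
    (hz : ∀ (j : Fin N) (F : ℕ → M) (k : ℕ),
      (GGRing.gen (n := n) (N := N + 1) (GGGen.z (Fin.castSucc j)) • F) k
        = GGRing.gen (n := n) (N := N) (GGGen.z j) • F k)
    (hd : ∀ (j : Fin N) (F : ℕ → M) (k : ℕ),
      (GGRing.gen (n := n) (N := N + 1) (GGGen.d (Fin.castSucc j)) • F) k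
        = GGRing.gen (n := n) (N := N) (GGGen.d j) • F k)
    (hcc : ∀ (i : Fin n) (F : ℕ → M) (k : ℕ),
      (GGRing.gen (n := n) (N := N + 1) (GGGen.c i) • F) k
        = GGRing.gen (n := n) (N := N) (GGGen.c i) • F k)
    (ht : ∀ (i : Fin n) (F : ℕ → M) (k : ℕ),
      (GGRing.gen (n := n) (N := N + 1) (GGGen.t i) • F) k
        = GGRing.gen (n := n) (N := N) (GGGen.t i) • F k)
    (htinv : ∀ (i : Fin n) (F : ℕ → M) (k : ℕ),
      (GGRing.gen (n := n) (N := N + 1) (GGGen.tinv i) • F) k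
        = GGRing.gen (n := n) (N := N) (GGGen.tinv i) • F k)
    (hzlast : ∀ F : ℕ → M,
      (GGRing.gen (n := n) (N := N + 1) (GGGen.z (Fin.last N)) • F) 0 = 0 ∧
      ∀ k : ℕ, (GGRing.gen (n := n) (N := N + 1) (GGGen.z (Fin.last N)) • F) (k + 1) = F k)
    (hdlast : ∀ (F : ℕ → M) (k : ℕ),
      (GGRing.gen (n := n) (N := N + 1) (GGGen.d (Fin.last N)) • F) k = (k + 1) • F (k + 1))
    (f : GGModule A →ₗ[GGRing n N] M) :
    (∀ i : Fin n,
      GGRing.euler Atil i •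
        (fun m : ℕ => (algebraMap ℂ (GGRing n N) ((m.factorial : ℂ)⁻¹)) •
          f (Submodule.Quotient.mk (GGRing.tauPow (fun i' => (m : ℤ) * w i')))) = 0) ∧
    (∀ j : Fin (N + 1),
      (GGRing.gen (n := n) (N := N + 1) (GGGen.d j) - GGRing.tauPow (n := n) (N := N + 1) (fun i' => Atil i' j)) •
        (fun m : ℕ => (algebraMap ℂ (GGRing n N) ((m.factorial : ℂ)⁻¹)) •
          f (Submodule.Quotient.mk (GGRing.tauPow (fun i' => (m : ℤ) * w i')))) = 0) ∧
    (∃! F : GGModule Atil →ₗ[GGRing n (N + 1)] (ℕ → M),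
      F (Submodule.Quotient.mk 1)
        = fun m : ℕ => (algebraMap ℂ (GGRing n N) ((m.factorial : ℂ)⁻¹)) •
            f (Submodule.Quotient.mk (GGRing.tauPow (fun i' => (m : ℤ) * w i')))) := by
  set x : M := f (Submodule.Quotient.mk 1) with hx
  have hcol : ∀ j : Fin N, (fun i => Atil i j.castSucc) = fun i => A i j := fun j => by
    ext i
    simp [hAtil]
  have hlast : ∀ i, Atil i (Fin.last N) = w i := fun i => by simp [hAtil]
  set S : ℕ → M := fun m => (algebraMap ℂ (GGRing n N) ((m.factorial : ℂ)⁻¹)) •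
    f (Submodule.Quotient.mk (GGRing.tauPow (fun i' => (m : ℤ) * w i')))
  have hSx : ∀ m : ℕ, S m = (algebraMap ℂ (GGRing n N) ((m.factorial : ℂ)⁻¹)) •
      GGRing.tauPow (fun i' => (m : ℤ) * w i') • x := fun m => by
    rw [hx, ← map_smul, ← Submodule.Quotient.mk_smul, smul_eq_mul, mul_one]
  have hτ : ∀ v, GGRing.ActsCoeffwise M (GGRing.tauPow (n := n) (N := N + 1) v)
      (GGRing.tauPow v) := GGRing.ActsCoeffwise.tauPow ht htinv
  have hEx : ∀ i, GGRing.euler A i • x = 0 := fun i => by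
    rw [hx, ← map_smul, GGModule.euler_smul_mk_one, map_zero]
  have hDx : ∀ j, GGRing.gen (n := n) (N := N) (.d j) • x
      = GGRing.tauPow (N := N) (fun i => A i j) • x := fun j => by
    rw [hx, ← map_smul, GGModule.gen_d_smul_mk_one, map_smul]
  have hES : ∀ i k, GGRing.euler A i • S k + ((k : ℤ) * w i) • S k = 0 := fun i k => by
    have h : GGRing.euler A i • GGRing.tauPow (N := N) (fun i' => (k : ℤ) * w i') • x
        + (((k : ℤ) * w i : ℤ) : GGRing n N) •
          GGRing.tauPow (N := N) (fun i' => (k : ℤ) * w i') • x = 0 := by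
      rw [← add_smul, ← mul_smul, ← GGRing.tauPow_mul_euler A (fun i' => (k : ℤ) * w i'),
        mul_smul, hEx, smul_zero]
    rw [← Int.cast_smul_eq_zsmul (GGRing n N), ← add_smul, hSx, ← mul_smul,
      ← Algebra.commutes, mul_smul, add_smul, h, smul_zero]
  have hzd : ∀ k, (GGRing.gen (n := n) (N := N + 1) (.z (Fin.last N)) •
      GGRing.gen (n := n) (N := N + 1) (.d (Fin.last N)) • S) k = k • S k := fun k => by
    cases k with
    | zero => rw [(hzlast _).1, zero_smul]
    | succ k => rw [(hzlast _).2, hdlast]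
  have hE : ∀ i, GGRing.euler Atil i • S = 0 := fun i => by
    ext k
    rw [GGRing.euler, add_smul, Finset.sum_smul, Fin.sum_univ_castSucc]
    simp only [mul_smul, Int.cast_smul_eq_zsmul, Pi.add_apply, Finset.sum_apply, Pi.smul_apply,
      hz, hd, hcc, hzd, Pi.zero_apply, hlast]
    rw [← hES i k, GGRing.euler, add_smul, Finset.sum_smul]
    simp only [mul_smul, Int.cast_smul_eq_zsmul, fun j => congrFun (hcol j) i]
    rw [← natCast_zsmul, smul_comm (w i) (k : ℤ)]
    abel
  have hD : ∀ j : Fin (N + 1), (GGRing.gen (n := n) (N := N + 1) (.d j)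
      - GGRing.tauPow (n := n) (N := N + 1) (fun i' => Atil i' j)) • S = 0 := fun j => by
    rw [sub_smul, sub_eq_zero]
    ext k
    rw [hτ]
    refine Fin.lastCases ?_ (fun j => ?_) j
    · rw [hdlast, funext hlast, hSx, hSx, ← mul_smul (GGRing.tauPow w), ← Algebra.commutes,
        mul_smul, ← mul_smul (GGRing.tauPow w), ← GGRing.tauPow_add,
        ← Nat.cast_smul_eq_nsmul (GGRing n N), ← mul_smul]
      congr 1
      · rw [← map_natCast (algebraMap ℂ (GGRing n N)), ← map_mul, Nat.factorial_succ]
        congr 1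
        have : (k : ℂ) + 1 ≠ 0 := by exact_mod_cast k.succ_ne_zero
        push_cast
        field_simp
      · congr 2
        ext i
        push_cast
        ring
    · have hDτ : ∀ v, GGRing.gen (n := n) (N := N) (.d j) • GGRing.tauPow (N := N) v • x
          = GGRing.tauPow (N := N) (fun i => A i j) • GGRing.tauPow (N := N) v • x := fun v => by
        rw [← mul_smul, ← (GGRing.tauPow_commute_gen_d v j).eq, mul_smul, hDx, ← mul_smul,
          (GGRing.tauPow_commute v _).eq, mul_smul]
      rw [hd, hcol, hSx, ← mul_smul, ← Algebra.commutes, mul_smul, hDτ, ← mul_smul,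
        Algebra.commutes, mul_smul]
  exact ⟨hE, hD, GGModule.existsUnique_linearMap hE hD⟩
end

section
/- Let A be an n×N homogeneous integer matrix (there exists φ ∈ ℤ^{1×n} with φ·a(j) = 1 for all j), let σ ⊆ {1,…,N} be a simplex, and let j₀ ∉ σ. Then for every k ∈ ℤ^σ there exists k' ∈ ℤ^σ such that k' − k ∈ A_σ^Tℤ^σ (so k and k' represent the same class in ℤ^σ/A_σ^Tℤ^σ) and 0 ≤ k'^T A_σ^{-1} a(j₀) < 1. In particular, every class of ℤ^σ/A_σ^Tℤ^σ has a representative k' with 0 ≤ Σ_{i∈σ} k'_i · p_{σi}(a(j₀)) < 1. -/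
open Matrix

/-- If a linear functional `φ` takes the value `1` on every column of `M` and on `M *ᵥ p`, then the
coordinates of `p` sum to `1`. -/
theorem sum_eq_one_of_vecMul_eq_one {m ι R : Type*} [Fintype m] [Fintype ι] [CommSemiring R]
    {M : Matrix m ι R} {φ : m → R} {p : ι → R} (hM : φ ᵥ* M = 1) (hp : φ ⬝ᵥ M *ᵥ p = 1) :
    ∑ i, p i = 1 := by
  rwa [dotProduct_mulVec, hM, one_dotProduct] at hp

/-- for a homogeneous configuration `A`, a simplex `σ` (with inverse
matrix `B` of `A_σ` over `ℚ`) and `j₀ ∉ σ`, every class of `ℤ^σ/A_σ^Tℤ^σ` has a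
representative `k'` with `0 ≤ k'^T A_σ^{-1} a(j₀) < 1`. -/
theorem representative_in_unit_window {n N : ℕ} (A : Matrix (Fin n) (Fin N) ℤ)
    (φ : Fin n → ℤ) (hφ : ∀ j : Fin N, (∑ r, φ r * A r j) = 1)
    (σ : Finset (Fin N)) (hσ : σ.card = n)
    (B : Matrix {i : Fin N // i ∈ σ} (Fin n) ℚ)
    (hB1 : (Matrix.of fun r (i : {i : Fin N // i ∈ σ}) => ((A r i.1 : ℤ) : ℚ)) * B = 1)
    (hB2 : B * (Matrix.of fun r (i : {i : Fin N // i ∈ σ}) => ((A r i.1 : ℤ) : ℚ)) = 1)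
    (j0 : Fin N) (hj0 : j0 ∉ σ) :
    ∀ k : {i : Fin N // i ∈ σ} → ℤ, ∃ k' : {i : Fin N // i ∈ σ} → ℤ,
      (∃ w : Fin n → ℤ, ∀ i : {i : Fin N // i ∈ σ},
        k' i - k i = ((Matrix.of fun r (i : {i : Fin N // i ∈ σ}) => A r i.1)ᵀ.mulVec w) i) ∧
      0 ≤ (∑ i : {i : Fin N // i ∈ σ}, (k' i : ℚ) * B.mulVec (fun r => ((A r j0 : ℤ) : ℚ)) i) ∧
      (∑ i : {i : Fin N // i ∈ σ}, (k' i : ℚ) * B.mulVec (fun r => ((A r j0 : ℤ) : ℚ)) i) < 1 := by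
  intro k
  set p := B.mulVec (fun r => ((A r j0 : ℤ) : ℚ)) with hp
  have hφ' (j : Fin N) : ∑ r, (φ r : ℚ) * (A r j : ℚ) = 1 := mod_cast hφ j
  have hsum : ∑ i, p i = 1 := by
    refine sum_eq_one_of_vecMul_eq_one (φ := fun r => (φ r : ℚ))
      (M := Matrix.of fun r (i : {i : Fin N // i ∈ σ}) => ((A r i.1 : ℤ) : ℚ)) ?_ ?_
    · ext i
      exact hφ' i
    · rw [hp, mulVec_mulVec, hB1, one_mulVec]
      exact hφ' j0
  set m := ⌊∑ i, (k i : ℚ) * p i⌋ with hm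
  have hshift : ∑ i, ((k i - m : ℤ) : ℚ) * p i = Int.fract (∑ i, (k i : ℚ) * p i) := by
    simp only [Int.cast_sub, sub_mul, Finset.sum_sub_distrib, ← Finset.mul_sum, hsum, mul_one,
      Int.fract, hm]
  refine ⟨fun i => k i - m, ⟨fun r => -m * φ r, fun i => ?_⟩, ?_, ?_⟩
  · have h : ∑ r, A r i * (-m * φ r) = -m * ∑ r, φ r * A r i := by
      rw [Finset.mul_sum]
      exact Finset.sum_congr rfl fun r _ => by ring
    simp only [mulVec, dotProduct, transpose_apply, of_apply, h, hφ]
    ring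
  · exact hshift ▸ Int.fract_nonneg _
  · exact hshift ▸ Int.fract_lt_one _
end

section
/- Let A be an n×N integer matrix with columns a(1),…,a(N), let I ⊆ {1,…,N} with |I| = n+1, and let Z₊ ⊆ I be such that for each j ∈ Z₊ the submatrix A_{I∖{j}} is invertible. Let ω ∈ ℝ^N, and suppose that either (a) I belongs to S(ω), or (b) for every j ∈ Z₊ the set I∖{j} belongs to S(ω). Then for every j ∈ Z₊ and every k ∉ I one has ω_{I∖{j}} · A_{I∖{j}}^{-1} a(k) < ω_k, where ω_{I∖{j}} denotes the row vector of the entries of ω indexed by I∖{j}. In other words, the cones C_Q and C_T of the secondary fan are contained in the cone C̃₊ = ∩_{j∈Z₊} { ω : ω_{I∖{j}} A_{I∖{j}}^{-1} a(k) < ω_k for all k ∉ I }. -/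
/-- `σ` belongs to the regular polyhedral subdivision `S(ω)`. -/
def memS {n N : ℕ} (A : Matrix (Fin n) (Fin N) ℤ) (ω : Fin N → ℝ)
    (σ : Set (Fin N)) : Prop :=
  ∃ v : Fin n → ℝ,
    (∀ i ∈ σ, (∑ r, v r * (A r i : ℝ)) = ω i) ∧
    (∀ j ∉ σ, (∑ r, v r * (A r j : ℝ)) < ω j)

/-- A row vector is determined by its products with `n` linearly independent vectors. -/
theorem eq_of_dotProduct_eq_of_linearIndependent {n : ℕ} {ι : Type*} [Fintype ι]
    {b : ι → Fin n → ℝ} (hb : LinearIndependent ℝ b) (hcard : Fintype.card ι = n)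
    {v w : Fin n → ℝ} (h : ∀ i, v ⬝ᵥ b i = w ⬝ᵥ b i) : v = w := by
  have hspan : Submodule.span ℝ (Set.range b) = ⊤ :=
    hb.span_eq_top_of_card_eq_finrank' (by simpa using hcard)
  have hlin : dotProductBilin ℝ ℝ v = dotProductBilin ℝ ℝ w :=
    LinearMap.ext_on_range hspan h
  exact dotProduct_eq v w fun u => LinearMap.congr_fun hlin u

/-- `C_Q` and `C_T` are contained in the cone `C̃₊`.  Here
`ω_{I∖{j}}·A_{I∖{j}}^{-1}·a(k)` is expressed as `v · a(k)` where `v` is the (unique,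
by the invertibility of `A_{I∖{j}}`) row vector with `v · a(i) = ω i` for all
`i ∈ I∖{j}`. -/
theorem cone_inclusion_Ctilde {n N : ℕ} (A : Matrix (Fin n) (Fin N) ℤ)
    (I : Finset (Fin N)) (hI : I.card = n + 1)
    (Zp : Finset (Fin N)) (hZp : Zp ⊆ I)
    (hinv : ∀ j ∈ Zp,
      LinearIndependent ℝ (fun i : {i : Fin N // i ∈ I.erase j} =>
        fun r : Fin n => (A r i.1 : ℝ)))
    (ω : Fin N → ℝ)
    (hω : memS A ω (↑I : Set (Fin N)) ∨
      ∀ j ∈ Zp, memS A ω (↑(I.erase j) : Set (Fin N))) :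
    ∀ j ∈ Zp, ∀ v : Fin n → ℝ,
      (∀ i ∈ I.erase j, (∑ r, v r * (A r i : ℝ)) = ω i) →
      ∀ k ∉ I, (∑ r, v r * (A r k : ℝ)) < ω k := by
  intro j hj v hv k hk
  obtain ⟨w, hw, hwk⟩ :
      ∃ w : Fin n → ℝ, (∀ i ∈ I.erase j, (∑ r, w r * (A r i : ℝ)) = ω i) ∧
        (∑ r, w r * (A r k : ℝ)) < ω k := by
    rcases hω with ⟨w, hw, hlt⟩ | h
    · exact ⟨w, fun i hi => hw i (Finset.mem_of_mem_erase hi), hlt k hk⟩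
    · obtain ⟨w, hw, hlt⟩ := h j hj
      exact ⟨w, hw, hlt k fun hk' => hk (Finset.mem_of_mem_erase hk')⟩
  have hcard : Fintype.card {i : Fin N // i ∈ I.erase j} = n := by
    rw [Fintype.card_coe, Finset.card_erase_of_mem (hZp hj), hI, Nat.add_sub_cancel]
  have hvw : v = w := eq_of_dotProduct_eq_of_linearIndependent (hinv j hj) hcard
    fun i => (hv i.1 i.2).trans (hw i.1 i.2).symm
  exact hvw ▸ hwk
end

section
/- Let α, β ∈ ℂ with Re α > 0 and Re β > 0, let κ ≥ 0 be a real number, let ρ > 0, and let f(w) = Σ_{n=0}^∞ a_n w^n be a holomorphic function on the disk {|w| < ρ}. Then for every z ∈ ℂ with |z| < ρ, the integral (1/Γ(β)) ∫_0^1 t^{α−1}(1−t)^{β−1} f(t^κ z) dt converges and equals Σ_{n=0}^∞ a_n · (Γ(α+κn)/Γ(α+β+κn)) · z^n, the series on the right being absolutely convergent. -/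
open Complex MeasureTheory

/-- The Beta density times a power `(t ^ κ) ^ n` is the Beta density with shifted parameter. -/
lemma cpow_mul_rpow_pow_eq (α β : ℂ) (κ : ℝ) (n : ℕ) {t : ℝ} (ht : 0 < t) :
    (t : ℂ) ^ (α - 1) * ((1 : ℂ) - t) ^ (β - 1) * ((t ^ κ : ℝ) : ℂ) ^ n =
      (t : ℂ) ^ (α + κ * n - 1) * ((1 : ℂ) - t) ^ (β - 1) := by
  have h : (((t ^ κ : ℝ) : ℂ)) ^ n = (t : ℂ) ^ ((κ : ℂ) * n) := by
    rw [← ofReal_pow, ← Real.rpow_mul_natCast ht.le, ofReal_cpow ht.le]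
    push_cast
    rfl
  rw [h, add_sub_right_comm, cpow_add _ _ (ofReal_ne_zero.mpr ht.ne')]
  ring

lemma integrableOn_Ioo_beta {α β : ℂ} (hα : 0 < α.re) (hβ : 0 < β.re) :
    IntegrableOn (fun t : ℝ => (t : ℂ) ^ (α - 1) * ((1 : ℂ) - t) ^ (β - 1))
      (Set.Ioo (0 : ℝ) 1) :=
  ((intervalIntegrable_iff_integrableOn_Ioc_of_le zero_le_one).mp
    (betaIntegral_convergent hα hβ)).mono_set Set.Ioo_subset_Ioc_self

lemma setIntegral_Ioo_beta {α β : ℂ} (hα : 0 < α.re) (hβ : 0 < β.re) :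
    ∫ t in Set.Ioo (0 : ℝ) 1, (t : ℂ) ^ (α - 1) * ((1 : ℂ) - t) ^ (β - 1) =
      Gamma α * Gamma β / Gamma (α + β) := by
  have hne : Gamma (α + β) ≠ 0 := Gamma_ne_zero_of_re_pos (by simpa using add_pos hα hβ)
  rw [Gamma_mul_Gamma_eq_betaIntegral hα hβ, mul_div_cancel_left₀ _ hne, betaIntegral,
    intervalIntegral.integral_of_le zero_le_one, integral_Ioc_eq_integral_Ioo]

/-- A moment of the Beta density as a quotient of Gamma values. -/
lemma setIntegral_Ioo_beta_mul_rpow_pow {α β : ℂ} (hα : 0 < α.re) (hβ : 0 < β.re)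
    {κ : ℝ} (hκ : 0 ≤ κ) (n : ℕ) :
    ∫ t in Set.Ioo (0 : ℝ) 1,
        (t : ℂ) ^ (α - 1) * ((1 : ℂ) - t) ^ (β - 1) * ((t ^ κ : ℝ) : ℂ) ^ n =
      Gamma β * (Gamma (α + κ * n) / Gamma (α + β + κ * n)) := by
  have hre : 0 < (α + κ * n).re := by
    simp only [add_re, re_ofReal_mul, natCast_re]
    positivity
  rw [setIntegral_congr_fun measurableSet_Ioo
    fun t ht => cpow_mul_rpow_pow_eq α β κ n ht.1, setIntegral_Ioo_beta hre hβ,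
    add_right_comm α]
  ring

lemma norm_mul_rpow_mul_pow_le {κ : ℝ} (hκ : 0 ≤ κ) (c z : ℂ) (n : ℕ) {t : ℝ}
    (ht : t ∈ Set.Ioo (0 : ℝ) 1) :
    ‖c * (((t ^ κ : ℝ) : ℂ) * z) ^ n‖ ≤ ‖c * z ^ n‖ := by
  have h0 : 0 ≤ t ^ κ := Real.rpow_nonneg ht.1.le κ
  have h1 : t ^ κ ≤ 1 := Real.rpow_le_one ht.1.le ht.2.le hκ
  simp only [norm_mul, norm_pow, norm_real, Real.norm_of_nonneg h0]
  gcongr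
  exact mul_le_of_le_one_left (norm_nonneg z) h1

lemma continuousOn_mul_rpow_mul_pow (κ : ℝ) (c z : ℂ) (n : ℕ) :
    ContinuousOn (fun t : ℝ => c * (((t ^ κ : ℝ) : ℂ) * z) ^ n) (Set.Ioo (0 : ℝ) 1) := by
  have h : ContinuousOn (fun t : ℝ => t ^ κ) (Set.Ioo (0 : ℝ) 1) :=
    continuousOn_id.rpow_const fun t ht => Or.inl ht.1.ne'
  exact continuousOn_const.mul (((continuous_ofReal.comp_continuousOn h).mul
    continuousOn_const).pow n)

/-- the Erdélyi–Kober integral of a power series.  For `Re α > 0`,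
`Re β > 0`, `κ ≥ 0` and `f(w) = Σ aₙ wⁿ` holomorphic on `|w| < ρ`, for `|z| < ρ` the
integral `(1/Γ(β)) ∫₀¹ t^{α−1}(1−t)^{β−1} f(t^κ z) dt` converges and equals
`Σ aₙ (Γ(α+κn)/Γ(α+β+κn)) zⁿ`, the latter series being absolutely convergent. -/
theorem erdelyi_kober_power_series (α β : ℂ) (hα : 0 < α.re) (hβ : 0 < β.re)
    (κ : ℝ) (hκ : 0 ≤ κ) (ρ : ℝ) (hρ : 0 < ρ) (a : ℕ → ℂ)
    (ha : ∀ w : ℂ, ‖w‖ < ρ → Summable (fun n : ℕ => a n * w ^ n))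
    (z : ℂ) (hz : ‖z‖ < ρ) :
    MeasureTheory.IntegrableOn
      (fun t : ℝ => (t : ℂ) ^ (α - 1) * ((1 : ℂ) - t) ^ (β - 1) *
        ∑' n : ℕ, a n * (((t ^ κ : ℝ) : ℂ) * z) ^ n)
      (Set.Ioo (0 : ℝ) 1) ∧
    Summable (fun n : ℕ =>
      ‖a n * (Complex.Gamma (α + κ * n) / Complex.Gamma (α + β + κ * n)) * z ^ n‖) ∧
    (Complex.Gamma β)⁻¹ *
        ∫ t in Set.Ioo (0 : ℝ) 1,
          (t : ℂ) ^ (α - 1) * ((1 : ℂ) - t) ^ (β - 1) *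
            ∑' n : ℕ, a n * (((t ^ κ : ℝ) : ℂ) * z) ^ n
      = ∑' n : ℕ, a n * (Complex.Gamma (α + κ * n) / Complex.Gamma (α + β + κ * n)) * z ^ n := by
  have hsum : Summable fun n : ℕ => ‖a n * z ^ n‖ := (ha z hz).norm
  have hbeta := integrableOn_Ioo_beta hα hβ
  have hΓ : Gamma β ≠ 0 := Gamma_ne_zero_of_re_pos hβ
  set g : ℝ → ℂ := fun t => (t : ℂ) ^ (α - 1) * ((1 : ℂ) - t) ^ (β - 1)
  have hterm (n : ℕ) : IntegrableOn
      (fun t : ℝ => g t * (a n * (((t ^ κ : ℝ) : ℂ) * z) ^ n)) (Set.Ioo (0 : ℝ) 1) :=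
    hbeta.mul_bdd (c := ‖a n * z ^ n‖)
      ((continuousOn_mul_rpow_mul_pow κ (a n) z n).aestronglyMeasurable measurableSet_Ioo)
      (ae_restrict_of_forall_mem measurableSet_Ioo fun t ht =>
        norm_mul_rpow_mul_pow_le hκ (a n) z n ht)
  have hnorm : Summable fun n : ℕ =>
      ∫ t in Set.Ioo (0 : ℝ) 1, ‖g t * (a n * (((t ^ κ : ℝ) : ℂ) * z) ^ n)‖ := by
    refine Summable.of_nonneg_of_le (fun n => integral_nonneg fun t => norm_nonneg _)
      (fun n => ?_) (hsum.mul_left (∫ t in Set.Ioo (0 : ℝ) 1, ‖g t‖))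
    rw [← integral_mul_const]
    refine setIntegral_mono_on (hterm n).norm (hbeta.norm.mul_const _) measurableSet_Ioo
      fun t ht => ?_
    rw [norm_mul]
    exact mul_le_mul_of_nonneg_left (norm_mul_rpow_mul_pow_le hκ (a n) z n ht) (norm_nonneg _)
  have hval (n : ℕ) : (Gamma β)⁻¹ *
      ∫ t in Set.Ioo (0 : ℝ) 1, g t * (a n * (((t ^ κ : ℝ) : ℂ) * z) ^ n) =
        a n * (Gamma (α + κ * n) / Gamma (α + β + κ * n)) * z ^ n := by
    have hfactor : (fun t : ℝ => g t * (a n * (((t ^ κ : ℝ) : ℂ) * z) ^ n)) =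
        fun t : ℝ => a n * z ^ n * (g t * ((t ^ κ : ℝ) : ℂ) ^ n) := by
      funext t
      ring
    rw [hfactor, integral_const_mul, setIntegral_Ioo_beta_mul_rpow_pow hα hβ hκ n]
    field_simp
  have hasSum := (hasSum_integral_of_summable_integral_norm hterm hnorm).mul_left (Gamma β)⁻¹
  simp only [hval, tsum_mul_left] at hasSum
  refine ⟨hbeta.mul_bdd (c := ∑' n, ‖a n * z ^ n‖) ?_ ?_, hasSum.summable.norm, hasSum.tsum_eq.symm⟩
  · exact (continuousOn_tsum (fun n => continuousOn_mul_rpow_mul_pow κ (a n) z n) hsum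
      fun n t ht => norm_mul_rpow_mul_pow_le hκ (a n) z n ht).aestronglyMeasurable
        measurableSet_Ioo
  · exact ae_restrict_of_forall_mem measurableSet_Ioo fun t ht =>
      tsum_of_norm_bounded hsum.hasSum fun n => norm_mul_rpow_mul_pow_le hκ (a n) z n ht
end

section
/- Let α ∈ ℂ, let s and κ be nonnegative integers, let 0 < ε < 1, let ρ > 0, and let f(w) = Σ_{n=0}^∞ a_n w^n be holomorphic on the disk {|w| < ρ}. Then for every z ∈ ℂ with (1+ε)^κ·|z| < ρ, one has Σ_{n=0}^∞ a_n · [(α+κn−1)(α+κn−2)⋯(α+κn−s)] · z^n = ((−1)^{s+1} s!/(2πi)) · ∮_{|t−1|=ε} t^{α−1} f(t^κ z) (1−t)^{-(s+1)} dt, where t^{α−1} = exp((α−1)·Log t) with the principal logarithm (well defined since the circle |t−1| = ε avoids (−∞,0]), the contour integral is over the positively oriented circle of radius ε centered at 1, and the empty product (s = 0) is interpreted as 1. Both sides converge. -/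
open Complex

/-- A series of functions that converges uniformly on a circle by the Weierstrass M-test can be
integrated term by term over that circle. -/
theorem hasSum_circleIntegral_of_norm_le {ι : Type*} [Countable ι] {F : ι → ℂ → ℂ}
    {u : ι → ℝ} {c : ℂ} {R : ℝ}
    (hR : 0 ≤ R) (hF : ∀ n, ContinuousOn (F n) (Metric.sphere c R)) (hu : Summable u)
    (hFu : ∀ n, ∀ t ∈ Metric.sphere c R, ‖F n t‖ ≤ u n) :
    HasSum (fun n => ∮ t in C(c, R), F n t) (∮ t in C(c, R), ∑' n, F n t) := by
  have h := (tendstoUniformlyOn_tsum hu hFu).tendsto_circleIntegral_of_continuousOn hR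
    (Filter.Eventually.of_forall fun s => continuousOn_finsetSum s fun n _ => hF n)
  refine h.congr fun s => ?_
  exact circleIntegral.integral_fun_sum fun n _ => (hF n).circleIntegrable hR

/-- The iterated derivatives of a complex power function on the slit plane. -/
theorem iteratedDeriv_cpow_const (β : ℂ) (k : ℕ) {t : ℂ} (ht : t ∈ slitPlane) :
    iteratedDeriv k (fun w : ℂ => w ^ β) t =
      (∏ l ∈ Finset.range k, (β - l)) * t ^ (β - k) := by
  induction k generalizing t with
  | zero => simp
  | succ k ih =>
    have hev : iteratedDeriv k (fun w : ℂ => w ^ β) =ᶠ[nhds t]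
        fun w => (∏ l ∈ Finset.range k, (β - l)) * w ^ (β - k) := by
      filter_upwards [isOpen_slitPlane.mem_nhds ht] with w hw using ih hw
    have hd : HasDerivAt (fun w : ℂ => w ^ (β - k)) ((β - k) * t ^ (β - k - 1) * 1) t :=
      (hasDerivAt_id t).cpow_const ht
    rw [iteratedDeriv_succ, hev.deriv_eq, (hd.const_mul _).deriv, Finset.prod_range_succ]
    push_cast
    rw [sub_sub]
    ring

theorem closedBall_one_subset_slitPlane {ε : ℝ} (hε : ε < 1) :
    Metric.closedBall (1 : ℂ) ε ⊆ slitPlane :=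
  (Metric.closedBall_subset_ball hε).trans ball_one_subset_slitPlane

/-- Cauchy's integral formula for the derivatives at `1` of a complex power function. -/
theorem circleIntegral_cpow_mul_inv_one_sub_pow (β : ℂ) (s : ℕ) {ε : ℝ} (hε0 : 0 < ε)
    (hε1 : ε < 1) :
    (-1 : ℂ) ^ (s + 1) * s.factorial / (2 * Real.pi * I) *
        ∮ t in C(1, ε), t ^ β * ((1 - t) ^ (s + 1))⁻¹ =
      ∏ l ∈ Finset.range s, (β - l) := by
  have hd : DiffContOnCl ℂ (fun t : ℂ => t ^ β) (Metric.ball 1 ε) := by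
    refine DifferentiableOn.diffContOnCl_ball (U := slitPlane) (fun t ht => ?_)
      (closedBall_one_subset_slitPlane hε1)
    exact ((hasDerivAt_id t).cpow_const ht).differentiableAt.differentiableWithinAt
  have hC := hd.circleIntegral_one_div_sub_center_pow_smul hε0 s
  rw [iteratedDeriv_cpow_const β s one_mem_slitPlane, one_cpow, mul_one] at hC
  have hint : (∮ t in C(1, ε), t ^ β * ((1 - t) ^ (s + 1))⁻¹) =
      (-1 : ℂ) ^ (s + 1) * ∮ t in C(1, ε), (1 / (t - 1) ^ (s + 1)) • t ^ β := by
    rw [← circleIntegral.integral_const_mul]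
    congr 1
    ext t
    rw [← neg_sub t 1, neg_pow, mul_inv, ← inv_pow, inv_neg, inv_one, smul_eq_mul]
    ring
  have hs : (s.factorial : ℂ) ≠ 0 := Nat.cast_ne_zero.mpr s.factorial_ne_zero
  have hsign : (-1 : ℂ) ^ (s + 1) * (-1) ^ (s + 1) = 1 := by
    rw [← mul_pow]; simp
  rw [hint, hC, smul_eq_mul]
  have hπ := two_pi_I_ne_zero
  generalize 2 * (Real.pi : ℂ) * I = p at *
  field_simp
  linear_combination (∏ l ∈ Finset.range s, (β - l)) * hsign

/-- Erdélyi–Kober operator with parameter `β = −s`, `s ∈ ℕ`, expressed as a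
contour integral over the circle `|t−1| = ε`.  Here `t^{α−1} = exp((α−1)·Log t)` with the
principal logarithm, and the falling product `(α+κn−1)⋯(α+κn−s)` appears coefficientwise. -/
theorem erdelyi_kober_negative_integer (α : ℂ) (s κ : ℕ) (ε : ℝ)
    (hε0 : 0 < ε) (hε1 : ε < 1) (ρ : ℝ) (hρ : 0 < ρ) (a : ℕ → ℂ)
    (ha : ∀ w : ℂ, ‖w‖ < ρ → Summable (fun n : ℕ => a n * w ^ n))
    (z : ℂ) (hz : (1 + ε) ^ κ * ‖z‖ < ρ) :
    Summable (fun n : ℕ =>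
      a n * (∏ l ∈ Finset.range s, (α + (κ : ℂ) * n - (l + 1))) * z ^ n) ∧
    (∑' n : ℕ, a n * (∏ l ∈ Finset.range s, (α + (κ : ℂ) * n - (l + 1))) * z ^ n)
      = ((-1 : ℂ) ^ (s + 1) * (s.factorial : ℂ)) / (2 * Real.pi * Complex.I) *
          ∮ t in C(1, ε),
            Complex.exp ((α - 1) * Complex.log t) *
              (∑' n : ℕ, a n * (t ^ κ * z) ^ n) * ((1 - t) ^ (s + 1))⁻¹ := by
  have hslit : ∀ t ∈ Metric.sphere (1 : ℂ) ε, t ∈ slitPlane := fun t ht =>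
    closedBall_one_subset_slitPlane hε1 (Metric.sphere_subset_closedBall ht)
  have hweight : ContinuousOn
      (fun t : ℂ => exp ((α - 1) * log t) * ((1 - t) ^ (s + 1))⁻¹) (Metric.sphere 1 ε) := by
    refine ContinuousOn.mul ?_ (ContinuousOn.inv₀ (by fun_prop) fun t ht => ?_)
    · exact (continuousOn_const.mul (continuousOn_id.clog hslit)).cexp
    · refine pow_ne_zero _ (sub_ne_zero.mpr ?_)
      rintro rfl
      simp [hε0.ne] at ht
  obtain ⟨M, hM⟩ := (isCompact_sphere (1 : ℂ) ε).exists_bound_of_continuousOn hweight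
  have hradius : ∀ t ∈ Metric.sphere (1 : ℂ) ε, ‖t ^ κ * z‖ ≤ (1 + ε) ^ κ * ‖z‖ := by
    intro t ht
    have ht1 : ‖t‖ ≤ 1 + ε := by
      have h := norm_add_le (1 : ℂ) (t - 1)
      rwa [add_sub_cancel, norm_one, mem_sphere_iff_norm.mp ht] at h
    rw [norm_mul, norm_pow]
    gcongr
  have hmajor : Summable fun n => M * (‖a n‖ * ((1 + ε) ^ κ * ‖z‖) ^ n) := by
    have h0 : 0 ≤ (1 + ε) ^ κ * ‖z‖ := by positivity
    have hnorm : ‖(((1 + ε) ^ κ * ‖z‖ : ℝ) : ℂ)‖ = (1 + ε) ^ κ * ‖z‖ := by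
      rw [norm_real, Real.norm_of_nonneg h0]
    have h := (ha _ (hnorm.trans_lt hz)).norm
    simp only [norm_mul (a _), norm_pow, hnorm] at h
    exact h.mul_left M
  have hsum := hasSum_circleIntegral_of_norm_le (c := 1) (R := ε)
    (F := fun n t => exp ((α - 1) * log t) * ((1 - t) ^ (s + 1))⁻¹ * (a n * (t ^ κ * z) ^ n))
    hε0.le (fun n => hweight.mul (by fun_prop)) hmajor (fun n t ht => by
      rw [norm_mul, norm_mul (a n), norm_pow]
      have hM0 := (norm_nonneg _).trans (hM t ht)
      gcongr
      · exact hM t ht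
      · exact hradius t ht)
  have hterm (n : ℕ) : (-1 : ℂ) ^ (s + 1) * s.factorial / (2 * Real.pi * I) *
      (∮ t in C(1, ε),
        exp ((α - 1) * log t) * ((1 - t) ^ (s + 1))⁻¹ * (a n * (t ^ κ * z) ^ n)) =
      a n * (∏ l ∈ Finset.range s, (α + (κ : ℂ) * n - (l + 1))) * z ^ n := by
    have hcongr : (∮ t in C(1, ε),
        exp ((α - 1) * log t) * ((1 - t) ^ (s + 1))⁻¹ * (a n * (t ^ κ * z) ^ n)) =
        ∮ t in C(1, ε), (a n * z ^ n) *
          (t ^ (α - 1 + (κ * n : ℕ)) * ((1 - t) ^ (s + 1))⁻¹) := by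
      refine circleIntegral.integral_congr hε0.le fun t ht => ?_
      have ht0 := slitPlane_ne_zero (hslit t ht)
      rw [cpow_add _ _ ht0, cpow_natCast, cpow_def_of_ne_zero ht0, mul_comm (log t), mul_pow,
        ← pow_mul]
      ring
    rw [hcongr, circleIntegral.integral_const_mul, mul_left_comm,
      circleIntegral_cpow_mul_inv_one_sub_pow _ s hε0 hε1, mul_right_comm]
    congr 2
    refine Finset.prod_congr rfl fun l _ => ?_
    push_cast
    ring
  have hmain := hsum.mul_left ((-1 : ℂ) ^ (s + 1) * s.factorial / (2 * Real.pi * I))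
  simp only [hterm, tsum_mul_left] at hmain
  refine ⟨hmain.summable, hmain.tsum_eq.trans ?_⟩
  simp only [mul_right_comm]
end
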